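/- arXiv:1104.1884 — 6 statements merged into one kernel-verified Lean document; each statement's English description precedes it below -/
import Mathlib

section
/- Let f : ℕ → (0,∞) be non-decreasing with f(n) → ∞. Then the following three statements are equivalent: (a) f ∈ H; (b) f ∈ G; (c) there exists K > 0 such that f(x+y) ≤ K·f(x)·f(y) for all positive integers x, y, and limsup_{n→∞} (1/n)·log f(n) = 0. -/
/-!
Sufficiency of the growth condition. Fix `i` with finite `f`-moment of the return time. Cutting
paths at the first visit to an intermediate state (`hit_decomp`) shows that every hitting time of
`i` has a finite moment, and, by `f (x + y) ≤ K f x f y`, reduces everything to the hitting time of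
`j ≠ i` from `i` (`mom_triangle`). That time is a geometric sum of excursions from `i` avoiding `j`,
followed by a successful piece. The excursions avoiding `j` have total mass `< 1`, but their
`K f`-weighted mass may exceed `1`. The weight `K f` is therefore replaced by its infimal convolution
with `n ↦ b ^ n`, `b > 1` (`tempered`). It is still submultiplicative; it dominates a multiple of
`f` because `f` is subexponential; and dominated convergence as `b ↓ 1` makes the weighted mass of
the excursions less than `1` (`exists_tempered_lt_one`), so the renewal series converges
(`mom_lt_top_of_contraction`).

Necessity. A single family of chains (`chain`) refutes membership in both classes when the
condition fails. There is a hub whose excursions have length `n + 3` with probability `s n`, an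
excursion visiting the special state `none` (as its first step) with probability `1 - q`. The
excursion law is chosen with finite `f`-moment, so the hub and the state next to it satisfy the
hypotheses of both classes, whereas the return time to `none` has an infinite `f`-moment:

* if `f (x + y) ≤ K f x f y` fails for every `K`, because that return time may be a sum of two
  independent excursion lengths (`not_mem_of_not_submul`);
* if `f` is not subexponential, because it has an exponential tail whose rate is arbitrarily small
  for suitable `q` and `s` (`not_mem_of_limsup`).
-/

open Filter
open scoped ENNReal

namespace MCPaper

variable {E : Type*}

open Classical in
/-- `hitAvoid P t a n x` is the probability that the chain with transition matrix `P`,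
started at `x`, is at `t` at time `n` while avoiding both `t` and `a` at times `1,…,n-1`.
For `t = a` this is the distribution of the first hitting time of `t`. -/
noncomputable def hitAvoid (P : E → E → ℝ≥0∞) (t a : E) : ℕ → E → ℝ≥0∞
  | 0, _ => 0
  | 1, x => P x t
  | n + 2, x => ∑' k : E, if k = t ∨ k = a then 0 else P x k * hitAvoid P t a (n + 1) k

/-- `firstHit P i j n = P_i(T_ij = n)`, the probability that the first hitting time of `j`
(first return time if `i = j`) starting from `i` equals `n`. -/
noncomputable def firstHit (P : E → E → ℝ≥0∞) (i j : E) (n : ℕ) : ℝ≥0∞ :=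
  hitAvoid P j j n i

/-- `P` is a stochastic matrix. -/
def IsStochastic (P : E → E → ℝ≥0∞) : Prop := ∀ i, ∑' j : E, P i j = 1

/-- irreducibility: any state can be reached from any other state. -/
def IsIrreducible (P : E → E → ℝ≥0∞) : Prop := ∀ i j : E, ∃ n : ℕ, 0 < firstHit P i j n

/-- recurrence: `P_i(T_ii < ∞) = 1` for every state `i`. -/
def IsRecurrent (P : E → E → ℝ≥0∞) : Prop := ∀ i : E, ∑' n : ℕ, firstHit P i i n = 1

/-- the generalized moment `E f(T_ij)` of the first hitting time of `j` from `i`. -/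
noncomputable def momGen (f : ℕ → ℝ) (P : E → E → ℝ≥0∞) (i j : E) : ℝ≥0∞ :=
  ∑' n : ℕ, ENNReal.ofReal (f n) * firstHit P i j n

/-- the class `𝒢`: a finite generalized `f`-moment of the return time of one state implies
finiteness for the return times of all states, for every irreducible recurrent chain. -/
def MemG (f : ℕ → ℝ) : Prop :=
  ∀ (S : Type) [Countable S] (P : S → S → ℝ≥0∞),
    IsStochastic P → IsIrreducible P → IsRecurrent P →
      ∀ i : S, momGen f P i i < ⊤ → ∀ j : S, momGen f P j j < ⊤

/-- the class `ℋ`: finiteness of `E f(T_ij)` and `E f(T_ji)` for a pair of states implies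
finiteness of `E f(T_kl)` for all pairs, for every irreducible recurrent chain. -/
def MemH (f : ℕ → ℝ) : Prop :=
  ∀ (S : Type) [Countable S] (P : S → S → ℝ≥0∞),
    IsStochastic P → IsIrreducible P → IsRecurrent P →
      ∀ i j : S, momGen f P i j < ⊤ → momGen f P j i < ⊤ →
        ∀ k l : S, momGen f P k l < ⊤


/-! ### First-step and first-passage decompositions -/

theorem hitAvoid_zero (P : E → E → ℝ≥0∞) (t a x : E) : hitAvoid P t a 0 x = 0 := by
  rw [hitAvoid]

open Classical in
/-- First-step analysis, uniformly in `n` (for `n = 0` the sum vanishes). -/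
theorem hitAvoid_succ (P : E → E → ℝ≥0∞) (t a : E) (n : ℕ) (x : E) :
    hitAvoid P t a (n + 1) x = (if n = 0 then P x t else 0) +
      ∑' k : E, if k = t ∨ k = a then 0 else P x k * hitAvoid P t a n k := by
  cases n with
  | zero => simp [hitAvoid]
  | succ n => simp [hitAvoid]

theorem hitAvoid_one (P : E → E → ℝ≥0∞) (t a x : E) : hitAvoid P t a 1 x = P x t := by
  rw [hitAvoid]

theorem hitAvoid_le_hit (P : E → E → ℝ≥0∞) (t a : E) (n : ℕ) (x : E) :
    hitAvoid P t a n x ≤ hitAvoid P t t n x := by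
  classical
  induction n generalizing x with
  | zero => simp [hitAvoid_zero]
  | succ n ih =>
    rw [hitAvoid_succ, hitAvoid_succ]
    gcongr with k
    by_cases h1 : k = t
    · simp [h1]
    · by_cases h2 : k = a
      · simp [h2]
      · simpa [h1, h2] using mul_le_mul_right (ih k) (P x k)

theorem hit_step_le (P : E → E → ℝ≥0∞) {t k : E} (hk : k ≠ t) (n : ℕ) (x : E) :
    P x k * hitAvoid P t t n k ≤ hitAvoid P t t (n + 1) x := by
  classical
  rw [hitAvoid_succ]
  refine le_trans ?_ le_add_self
  refine le_trans (le_of_eq ?_) (ENNReal.le_tsum k)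
  simp [hk]

/-- First-passage decomposition: on its way from `x` to `j` the chain either avoids `i`, or it
visits `i` before `j` and then restarts from `i`. -/
theorem hit_decomp (P : E → E → ℝ≥0∞) {i j : E} (hij : i ≠ j) (n : ℕ) (x : E) :
    hitAvoid P j j n x = hitAvoid P j i n x +
      ∑ p ∈ Finset.HasAntidiagonal.antidiagonal n, hitAvoid P i j p.1 x * hitAvoid P j j p.2 i := by
  classical
  induction n generalizing x with
  | zero => simp [hitAvoid_zero]
  | succ n ih =>
    rw [Finset.Nat.sum_antidiagonal_succ]
    simp only [hitAvoid_zero, zero_mul, zero_add]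
    rw [hitAvoid_succ P j j, hitAvoid_succ P j i, add_assoc]
    congr 1
    simp only [hitAvoid_succ P i j, add_mul, Finset.sum_add_distrib]
    have h1 : ∑ p ∈ Finset.HasAntidiagonal.antidiagonal n,
        (if p.1 = 0 then P x i else 0) * hitAvoid P j j p.2 i
        = P x i * hitAvoid P j j n i := by
      rw [Finset.sum_eq_single (0, n)]
      · simp
      · rintro ⟨a, b⟩ hab hne
        have : a ≠ 0 := by
          rintro rfl
          simp at hab
          exact hne (by simp [hab])
        simp [this]
      · simp
    rw [h1]
    have h2 : ∑ p ∈ Finset.HasAntidiagonal.antidiagonal n,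
        (∑' k : E, if k = i ∨ k = j then 0 else P x k * hitAvoid P i j p.1 k)
          * hitAvoid P j j p.2 i
        = ∑' k : E, if k = i ∨ k = j then 0 else P x k *
          ∑ p ∈ Finset.HasAntidiagonal.antidiagonal n, hitAvoid P i j p.1 k * hitAvoid P j j p.2 i := by
      simp_rw [← ENNReal.tsum_mul_right]
      rw [← Summable.tsum_finsetSum (fun _ _ => ENNReal.summable)]
      congr 1; ext k
      split_ifs
      · simp
      · rw [Finset.mul_sum]
        exact Finset.sum_congr rfl fun p _ => by ring
    rw [h2]
    have h3 : P x i * hitAvoid P j j n i = ∑' k : E, if k = i then P x k * hitAvoid P j j n k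
        else 0 := by
      rw [tsum_eq_single i]
      · simp
      · intro k hk; simp [hk]
    rw [h3, add_left_comm, ← ENNReal.tsum_add, ← ENNReal.tsum_add]
    congr 1; ext k
    by_cases hkj : k = j
    · have : ¬ j = i := fun h => hij h.symm
      simp [hkj, this]
    · by_cases hki : k = i
      · simp [hki, hij]
      · simp only [hkj, hki, or_self, if_false, zero_add]
        rw [ih k, mul_add]

theorem mul_hit_le_hit (P : E → E → ℝ≥0∞) {i j : E} (hij : i ≠ j) (m n : ℕ) (x : E) :
    hitAvoid P i j m x * hitAvoid P j j n i ≤ hitAvoid P j j (m + n) x := by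
  rw [hit_decomp P hij (m + n) x]
  refine le_trans ?_ le_add_self
  exact Finset.single_le_sum
    (f := fun p : ℕ × ℕ => hitAvoid P i j p.1 x * hitAvoid P j j p.2 i)
    (fun _ _ => zero_le) (a := (m, n)) (by simp)

/-! ### Weighted sums of hitting probabilities -/

/-- `mom g P t a x` is the expectation of `g(T)` on the event that `t` is reached, at time `T`,
strictly before `a` (or just that `t` is reached, if `a = t`), for an `ℝ≥0∞`-valued weight `g`. -/
noncomputable def mom (g : ℕ → ℝ≥0∞) (P : E → E → ℝ≥0∞) (t a x : E) : ℝ≥0∞ :=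
  ∑' n : ℕ, g n * hitAvoid P t a n x

theorem tsum_antidiagonal_eq (F : ℕ × ℕ → ℝ≥0∞) :
    ∑' n : ℕ, ∑ p ∈ Finset.HasAntidiagonal.antidiagonal n, F p = ∑' p : ℕ × ℕ, F p := by
  rw [← Finset.HasAntidiagonal.sigmaAntidiagonalEquivProd.tsum_eq F, ENNReal.tsum_sigma']
  congr 1; ext n
  rw [tsum_fintype, ← Finset.sum_coe_sort]
  rfl

theorem mom_mono {g g' : ℕ → ℝ≥0∞} (P : E → E → ℝ≥0∞) (t a x : E)
    (h : ∀ n, 0 < n → g n ≤ g' n) : mom g P t a x ≤ mom g' P t a x := by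
  refine ENNReal.tsum_le_tsum fun n => ?_
  rcases Nat.eq_zero_or_pos n with rfl | hn
  · simp [hitAvoid_zero]
  · gcongr
    exact h n hn

theorem mom_const_mul (c : ℝ≥0∞) (g : ℕ → ℝ≥0∞) (P : E → E → ℝ≥0∞) (t a x : E) :
    mom (fun n => c * g n) P t a x = c * mom g P t a x := by
  simp only [mom, mul_assoc, ENNReal.tsum_mul_left]

theorem mom_le_hit (g : ℕ → ℝ≥0∞) (P : E → E → ℝ≥0∞) (t a x : E) :
    mom g P t a x ≤ mom g P t t x :=
  ENNReal.tsum_le_tsum fun n => by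
    gcongr
    exact hitAvoid_le_hit P t a n x

theorem mom_decomp_le {g g₁ g₂ : ℕ → ℝ≥0∞} (P : E → E → ℝ≥0∞) {i j : E} (hij : i ≠ j) (x : E)
    (h : ∀ m n, 0 < m → 0 < n → g (m + n) ≤ g₁ m * g₂ n) :
    mom g P j j x ≤ mom g P j i x + mom g₁ P i j x * mom g₂ P j j i := by
  have e1 : mom g₁ P i j x * mom g₂ P j j i =
      ∑' n : ℕ, ∑ p ∈ Finset.HasAntidiagonal.antidiagonal n,
        (g₁ p.1 * hitAvoid P i j p.1 x) * (g₂ p.2 * hitAvoid P j j p.2 i) := by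
    rw [tsum_antidiagonal_eq, ENNReal.tsum_prod']
    simp only [ENNReal.tsum_mul_left, ENNReal.tsum_mul_right, mom]
  rw [e1, mom, mom, ← ENNReal.tsum_add]
  refine ENNReal.tsum_le_tsum fun n => ?_
  rw [hit_decomp P hij n x, mul_add, Finset.mul_sum]
  refine add_le_add le_rfl (Finset.sum_le_sum fun p hp => ?_)
  rcases Nat.eq_zero_or_pos p.1 with h1 | h1
  · simp [h1, hitAvoid_zero]
  rcases Nat.eq_zero_or_pos p.2 with h2 | h2
  · simp [h2, hitAvoid_zero]
  rw [← Finset.HasAntidiagonal.mem_antidiagonal.1 hp, mul_mul_mul_comm]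
  gcongr
  exact h _ _ h1 h2

/-- `prob P t a x` is the probability that the chain started at `x` reaches `t`, before `a` if
`a ≠ t`. -/
noncomputable def prob (P : E → E → ℝ≥0∞) (t a x : E) : ℝ≥0∞ :=
  ∑' n : ℕ, hitAvoid P t a n x

theorem prob_decomp (P : E → E → ℝ≥0∞) {i j : E} (hij : i ≠ j) (x : E) :
    prob P j j x = prob P j i x + prob P i j x * prob P j j i := by
  have e1 : prob P i j x * prob P j j i =
      ∑' n : ℕ, ∑ p ∈ Finset.HasAntidiagonal.antidiagonal n,
        hitAvoid P i j p.1 x * hitAvoid P j j p.2 i := by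
    rw [tsum_antidiagonal_eq, ENNReal.tsum_prod']
    simp only [ENNReal.tsum_mul_left, ENNReal.tsum_mul_right, prob]
  rw [e1, prob, prob, ← ENNReal.tsum_add]
  exact tsum_congr fun n => hit_decomp P hij n x

theorem prob_add_le_one {P : E → E → ℝ≥0∞} (hP : IsStochastic P) {i j : E} (hij : i ≠ j) (x : E) :
    prob P i j x + prob P j i x ≤ 1 := by
  classical
  rw [prob, prob, ← ENNReal.tsum_add]
  refine ENNReal.tsum_le_of_sum_range_le fun N => ?_
  induction N generalizing x with
  | zero => simp
  | succ N ih =>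
    rw [Finset.sum_range_succ']
    simp only [hitAvoid_zero, add_zero, hitAvoid_succ]
    have key : ∀ n, ((if n = 0 then P x i else 0) +
          ∑' k : E, if k = i ∨ k = j then 0 else P x k * hitAvoid P i j n k) +
        ((if n = 0 then P x j else 0) +
          ∑' k : E, if k = j ∨ k = i then 0 else P x k * hitAvoid P j i n k) =
        (if n = 0 then P x i + P x j else 0) + ∑' k : E, if k = i ∨ k = j then 0 else
          P x k * (hitAvoid P i j n k + hitAvoid P j i n k) := by
      intro n
      rw [add_add_add_comm, ← ENNReal.tsum_add]
      congr 1
      · split_ifs <;> simp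
      · congr 1; ext k
        by_cases h1 : k = i
        · simp [h1]
        · by_cases h2 : k = j
          · simp [h2]
          · simp [h1, h2, mul_add]
    simp only [key, Finset.sum_add_distrib]
    rw [← Summable.tsum_finsetSum (fun _ _ => ENNReal.summable)]
    have h1 : ∑ n ∈ Finset.range N, (if n = 0 then P x i + P x j else 0) ≤
        ∑' k : E, if k = i ∨ k = j then P x k else 0 := by
      calc _ ≤ P x i + P x j := by
            rw [Finset.sum_ite_eq']
            split_ifs <;> simp
        _ = ∑ k ∈ {i, j}, (if k = i ∨ k = j then P x k else 0) := by
            rw [Finset.sum_pair hij]; simp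
        _ ≤ _ := ENNReal.sum_le_tsum _
    refine (add_le_add_left h1 _).trans ?_
    rw [← ENNReal.tsum_add, ← hP x]
    refine ENNReal.tsum_le_tsum fun k => ?_
    split_ifs with hk
    · simp
    · rw [zero_add, ← Finset.mul_sum]
      exact mul_le_of_le_one_right' (ih k)

theorem prob_self_le_one {P : E → E → ℝ≥0∞} (hP : IsStochastic P) (i x : E) :
    prob P i i x ≤ 1 := by
  classical
  refine ENNReal.tsum_le_of_sum_range_le fun N => ?_
  induction N generalizing x with
  | zero => simp
  | succ N ih =>
    rw [Finset.sum_range_succ']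
    simp only [hitAvoid_zero, add_zero, hitAvoid_succ, Finset.sum_add_distrib, or_self]
    rw [← Summable.tsum_finsetSum (fun _ _ => ENNReal.summable)]
    have h1 : ∑ n ∈ Finset.range N, (if n = 0 then P x i else 0) ≤
        ∑' k : E, if k = i then P x k else 0 := by
      rw [tsum_ite_eq, Finset.sum_ite_eq']
      split_ifs <;> simp
    refine (add_le_add_left h1 _).trans ?_
    rw [← ENNReal.tsum_add, ← hP x]
    refine ENNReal.tsum_le_tsum fun k => ?_
    split_ifs with hk
    · simp
    · rw [zero_add, ← Finset.mul_sum]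
      exact mul_le_of_le_one_right' (ih k)

theorem hit_le_one {P : E → E → ℝ≥0∞} (hP : IsStochastic P) (i : E) (n : ℕ) (x : E) :
    hitAvoid P i i n x ≤ 1 :=
  (ENNReal.le_tsum n).trans (prob_self_le_one hP i x)

/-! ### Recurrence of one state suffices -/

/-- In an irreducible chain some excursion from `i` visits `j`. -/
theorem exists_hitAvoid_pos {P : E → E → ℝ≥0∞} (hI : IsIrreducible P) {i j : E} (hij : i ≠ j) :
    ∃ m, 0 < hitAvoid P j i m i := by
  by_contra! h
  have h0 : ∀ m, hitAvoid P j i m i = 0 := fun m => le_antisymm (h m) zero_le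
  have : ∀ n, hitAvoid P j j n i = 0 := by
    intro n
    induction n using Nat.strong_induction_on with
    | _ n ih =>
      rw [hit_decomp P hij, h0, zero_add]
      refine Finset.sum_eq_zero fun p hp => ?_
      rcases Nat.eq_zero_or_pos p.1 with h1 | h1
      · simp [h1, hitAvoid_zero]
      · rw [ih p.2 (by have := Finset.HasAntidiagonal.mem_antidiagonal.1 hp; omega), mul_zero]
  obtain ⟨n, hn⟩ := hI i j
  exact hn.ne' (this n)

theorem prob_pos_of_hit {P : E → E → ℝ≥0∞} {t a x : E} {n : ℕ} (h : 0 < hitAvoid P t a n x) :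
    0 < prob P t a x := h.trans_le (ENNReal.le_tsum n)

theorem prob_return_lt_one {P : E → E → ℝ≥0∞} (hI : IsIrreducible P) {i j : E} (hij : i ≠ j)
    (hr : prob P i i i = 1) : prob P i j i < 1 := by
  obtain ⟨m, hm⟩ := exists_hitAvoid_pos hI hij
  obtain ⟨n, hn⟩ := hI j i
  have h := prob_decomp P hij.symm i
  rw [hr] at h
  have hpos : prob P j i i * prob P i i j ≠ 0 :=
    mul_ne_zero (prob_pos_of_hit hm).ne' (prob_pos_of_hit hn).ne'
  have hfin : prob P i j i ≠ ⊤ := ne_top_of_le_ne_top ENNReal.one_ne_top (h ▸ le_self_add)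
  conv_rhs => rw [h]
  exact ENNReal.lt_add_right hfin hpos

/-- Recurrence is a class property. -/
theorem isRecurrent_of_state {P : E → E → ℝ≥0∞} (hP : IsStochastic P) (hI : IsIrreducible P)
    (i : E) (hr : ∑' n, firstHit P i i n = 1) : IsRecurrent P := by
  intro j
  by_cases hij : i = j
  · rwa [← hij]
  change prob P j j j = 1
  have hr : prob P i i i = 1 := hr
  have ha := prob_return_lt_one hI hij hr
  obtain ⟨m, hm⟩ := exists_hitAvoid_pos hI hij
  have hb := prob_pos_of_hit hm
  have hab := prob_add_le_one hP hij i
  have d1 := prob_decomp P (Ne.symm hij) i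
  rw [hr] at d1
  have hbfin : prob P j i i ≠ ⊤ :=
    ne_top_of_le_ne_top ENNReal.one_ne_top (le_add_self.trans hab)
  have hji : prob P i i j = 1 := by
    refine le_antisymm (prob_self_le_one hP i j) ?_
    by_contra! hlt
    have h1 : prob P j i i * prob P i i j < prob P j i i := by
      conv_rhs => rw [← mul_one (prob P j i i)]
      exact ENNReal.mul_lt_mul_right hb.ne' hbfin hlt
    have := ENNReal.add_lt_add_left ha.ne_top h1
    rw [← d1] at this
    exact absurd hab (not_le.2 this)
  have hij1 : prob P j j i = 1 := by
    have d2 := prob_decomp P hij i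
    rw [hji, mul_one] at d1
    have hfin : prob P j j i ≠ ⊤ := ne_top_of_le_ne_top ENNReal.one_ne_top (prob_self_le_one hP j i)
    lift prob P j j i to NNReal using hfin with h
    lift prob P i j i to NNReal using ha.ne_top with a
    lift prob P j i i to NNReal using hbfin with b
    norm_cast at *
    have d1' : (1 : ℝ) = a + b := by exact_mod_cast d1
    have d2' : (h : ℝ) = b + a * h := by exact_mod_cast d2
    have ha' : (a : ℝ) < 1 := by exact_mod_cast ha
    have : (h : ℝ) = 1 := by
      have : (1 - (a : ℝ)) * (h - 1) = 0 := by nlinarith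
      rcases mul_eq_zero.1 this with h | h <;> linarith
    exact_mod_cast this
  have d3 := prob_decomp P hij j
  have d4 := prob_decomp P (Ne.symm hij) j
  rw [hji, mul_one] at d4
  rw [d3, hij1, mul_one, add_comm, ← d4]

/-! ### Submultiplicative subexponential weights give solidarity -/

theorem mom_avoid_lt_top {g : ℕ → ℝ≥0∞} (hg : Monotone g) {P : E → E → ℝ≥0∞}
    (hI : IsIrreducible P) {i j : E} (hij : i ≠ j) {x : E} (h : mom g P j j x < ⊤) :
    mom g P i j x < ⊤ := by
  obtain ⟨n, hn⟩ := hI i j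
  have : mom g P i j x * hitAvoid P j j n i ≤ mom g P j j x := by
    rw [mom, ← ENNReal.tsum_mul_right]
    refine le_trans (ENNReal.tsum_le_tsum fun m => ?_) (ENNReal.tsum_comp_le_tsum_of_injective
      (add_left_injective n) fun m => g m * hitAvoid P j j m x)
    rw [mul_assoc]
    exact mul_le_mul' (hg (Nat.le_add_right m n)) (mul_hit_le_hit P hij m n x)
  exact ENNReal.lt_top_of_mul_ne_top_left (this.trans_lt h).ne hn.ne'

theorem mom_to_lt_top {g : ℕ → ℝ≥0∞} (hg : Monotone g) {P : E → E → ℝ≥0∞}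
    (hI : IsIrreducible P) {i j : E} (hij : i ≠ j) (h : mom g P i i i < ⊤) :
    mom g P i i j < ⊤ := by
  obtain ⟨m, hm⟩ := exists_hitAvoid_pos hI hij
  have : hitAvoid P j i m i * mom g P i i j ≤ mom g P i i i := by
    rw [mom, ← ENNReal.tsum_mul_left]
    refine le_trans (ENNReal.tsum_le_tsum fun n => ?_) (ENNReal.tsum_comp_le_tsum_of_injective
      (add_right_injective m) fun m => g m * hitAvoid P i i m i)
    rw [mul_left_comm]
    exact mul_le_mul' (hg (Nat.le_add_left n m)) (mul_hit_le_hit P hij.symm m n i)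
  exact ENNReal.lt_top_of_mul_ne_top_right (this.trans_lt h).ne hm.ne'

theorem mom_triangle {g : ℕ → ℝ≥0∞} (hg : Monotone g) {K : ℝ≥0∞} (hK : K ≠ ⊤)
    (hsub : ∀ m n, 0 < m → 0 < n → g (m + n) ≤ K * g m * g n) {P : E → E → ℝ≥0∞}
    (hI : IsIrreducible P) {k m l : E} (hlm : l ≠ m) (h1 : mom g P m m k < ⊤)
    (h2 : mom g P l l m < ⊤) : mom g P l l k < ⊤ := by
  refine (mom_decomp_le (g₁ := fun n => K * g n) P hlm.symm k hsub).trans_lt ?_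
  rw [mom_const_mul]
  refine ENNReal.add_lt_top.2 ⟨mom_avoid_lt_top hg hI hlm h1, ?_⟩
  exact ENNReal.mul_lt_top (ENNReal.mul_lt_top hK.lt_top ((mom_le_hit _ _ _ _ _).trans_lt h1)) h2

/-- Renewal bound: for a submultiplicative weight whose expectation over the excursions from `i`
that avoid `j` is less than `1`, the geometric series of such excursions converges. Truncating the
weight makes the quantity to be bounded finite, so that it can be absorbed. -/
theorem mom_lt_top_of_contraction {g : ℕ → ℝ≥0∞} (hfin : ∀ n, g n ≠ ⊤)
    (hsub : ∀ m n, 0 < m → 0 < n → g (m + n) ≤ g m * g n) {P : E → E → ℝ≥0∞}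
    (hP : IsStochastic P) {i j : E} (hij : i ≠ j) (hA : mom g P i j i < 1)
    (hB : mom g P j i i < ⊤) : mom g P j j i < ⊤ := by
  have key : ∀ N : ℕ, ∑ n ∈ Finset.range N, g n * hitAvoid P j j n i ≤
      mom g P j i i / (1 - mom g P i j i) := by
    intro N
    set gN : ℕ → ℝ≥0∞ := fun n => if n < N then g n else 0 with hgN
    have e : mom gN P j j i = ∑ n ∈ Finset.range N, g n * hitAvoid P j j n i := by
      rw [mom, tsum_eq_sum (s := Finset.range N)]
      · refine Finset.sum_congr rfl fun n hn => ?_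
        simp [hgN, Finset.mem_range.1 hn]
      · intro n hn
        simp [hgN, Finset.mem_range] at hn ⊢
        intro h; omega
    have hS : mom gN P j j i ≠ ⊤ := by
      rw [e]
      refine (ENNReal.sum_lt_top.2 fun n _ => ?_).ne
      exact ENNReal.mul_lt_top (hfin n).lt_top ((hit_le_one hP j n i).trans_lt ENNReal.one_lt_top)
    have hle : mom gN P j j i ≤ mom g P j i i + mom g P i j i * mom gN P j j i := by
      refine (mom_decomp_le (g₁ := g) (g₂ := gN) P hij i ?_).trans ?_
      · intro m n hm hn
        by_cases h : m + n < N
        · simp only [hgN, h, if_true, (by omega : n < N)]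
          exact hsub m n hm hn
        · simp [hgN, h]
      · gcongr
        refine mom_mono _ _ _ _ fun n _ => ?_
        simp only [hgN]; split_ifs <;> simp
    rw [← e]
    rw [ENNReal.le_div_iff_mul_le (Or.inl (tsub_pos_of_lt hA).ne')
      (Or.inl (ENNReal.sub_ne_top ENNReal.one_ne_top)), ENNReal.mul_sub (fun _ _ => hS), mul_one,
      tsub_le_iff_right, mul_comm]
    exact hle
  refine (ENNReal.tsum_le_of_sum_range_le key).trans_lt ?_
  exact ENNReal.div_lt_top hB.ne (pos_iff_ne_zero.1 (tsub_pos_of_lt hA))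

/-- The weight `F = K f` with its value at `0` normalised to `1`, which makes a function with
`f (x + y) ≤ K f x f y` submultiplicative. -/
noncomputable def normWeight (f : ℕ → ℝ) (K : ℝ) (n : ℕ) : ℝ := if n = 0 then 1 else K * f n

/-- The infimal convolution of `n ↦ b ^ n` with the normalised weight: the largest submultiplicative
weight below both. For `b > 1` it is comparable to `f`, yet it tends to a weight bounded by `1`
as `b` decreases to `1`. -/
noncomputable def tempered (f : ℕ → ℝ) (K b : ℝ) (n : ℕ) : ℝ :=
  (Finset.HasAntidiagonal.antidiagonal n).inf' ⟨(0, n), by simp⟩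
    fun p => b ^ p.1 * normWeight f K p.2

section tempered

variable {f : ℕ → ℝ} {K b : ℝ}

theorem normWeight_pos (hpos : ∀ n, 0 < f n) (hK : 0 < K) (n : ℕ) : 0 < normWeight f K n := by
  unfold normWeight; split_ifs
  · exact one_pos
  · exact mul_pos hK (hpos n)

theorem normWeight_add_le (hK : 0 < K)
    (hsub : ∀ x y : ℕ, 0 < x → 0 < y → f (x + y) ≤ K * f x * f y) (m n : ℕ) :
    normWeight f K (m + n) ≤ normWeight f K m * normWeight f K n := by
  rcases Nat.eq_zero_or_pos m with rfl | hm
  · simp [normWeight]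
  rcases Nat.eq_zero_or_pos n with rfl | hn
  · simp [normWeight]
  have h1 : m + n ≠ 0 := by omega
  simp only [normWeight, h1, hm.ne', hn.ne', if_false]
  have := mul_le_mul_of_nonneg_left (hsub m n hm hn) hK.le
  linarith

theorem tempered_exists (n : ℕ) : ∃ m l, m + l = n ∧
    tempered f K b n = b ^ m * normWeight f K l := by
  obtain ⟨p, hp, h⟩ := Finset.exists_mem_eq_inf'
    (s := Finset.HasAntidiagonal.antidiagonal n) ⟨(0, n), by simp⟩
    (fun p : ℕ × ℕ => b ^ p.1 * normWeight f K p.2)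
  exact ⟨p.1, p.2, Finset.HasAntidiagonal.mem_antidiagonal.1 hp, h⟩

theorem tempered_le (m l : ℕ) : tempered f K b (m + l) ≤ b ^ m * normWeight f K l :=
  Finset.inf'_le (s := Finset.HasAntidiagonal.antidiagonal (m + l))
    (fun p : ℕ × ℕ => b ^ p.1 * normWeight f K p.2) (b := (m, l)) (by simp)

theorem tempered_le_pow (n : ℕ) : tempered f K b n ≤ b ^ n := by
  simpa [normWeight] using tempered_le (f := f) (K := K) (b := b) n 0

theorem tempered_le_weight (n : ℕ) : tempered f K b n ≤ normWeight f K n := by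
  simpa using tempered_le (f := f) (K := K) (b := b) 0 n

theorem tempered_nonneg (hpos : ∀ n, 0 < f n) (hK : 0 < K) (hb : 0 < b) (n : ℕ) :
    0 ≤ tempered f K b n := by
  obtain ⟨m, l, -, h⟩ := tempered_exists (f := f) (K := K) (b := b) n
  rw [h]
  exact mul_nonneg (pow_nonneg hb.le _) (normWeight_pos hpos hK l).le

theorem tempered_add_le (hK : 0 < K) (hb : 0 < b)
    (hsub : ∀ x y : ℕ, 0 < x → 0 < y → f (x + y) ≤ K * f x * f y) (x y : ℕ) :
    tempered f K b (x + y) ≤ tempered f K b x * tempered f K b y := by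
  obtain ⟨m, l, rfl, h⟩ := tempered_exists (f := f) (K := K) (b := b) x
  obtain ⟨m', l', rfl, h'⟩ := tempered_exists (f := f) (K := K) (b := b) y
  rw [h, h', add_add_add_comm]
  refine (tempered_le _ _).trans ?_
  rw [pow_add, mul_mul_mul_comm]
  exact mul_le_mul_of_nonneg_left (normWeight_add_le hK hsub l l')
    (mul_nonneg (pow_nonneg hb.le _) (pow_nonneg hb.le _))

theorem le_tempered (hpos : ∀ n, 0 < f n) (hK : 0 < K)
    (hsub : ∀ x y : ℕ, 0 < x → 0 < y → f (x + y) ≤ K * f x * f y) {C : ℝ}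
    (hC : ∀ n, f n ≤ C * b ^ n) (hCK : 1 ≤ C * K) (n : ℕ) : f n ≤ C * tempered f K b n := by
  obtain ⟨m, l, rfl, h⟩ := tempered_exists (f := f) (K := K) (b := b) n
  rw [h]
  rcases Nat.eq_zero_or_pos l with rfl | hl
  · simpa [normWeight] using hC m
  simp only [normWeight, hl.ne', if_false]
  rcases Nat.eq_zero_or_pos m with rfl | hm
  · have := mul_le_mul_of_nonneg_right hCK (hpos l).le
    simp only [zero_add, pow_zero, one_mul]
    linarith
  · calc f (m + l) ≤ K * f m * f l := hsub m l hm hl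
      _ = f m * (K * f l) := by ring
      _ ≤ (C * b ^ m) * (K * f l) :=
        mul_le_mul_of_nonneg_right (hC m) (mul_pos hK (hpos l)).le
      _ = _ := by ring

end tempered

/-- Dominated convergence as the base `b` decreases to `1`: a summable defective law gets
tempered mass below `1`. -/
theorem exists_tempered_lt_one {f : ℕ → ℝ} {K : ℝ} (a : ℕ → ℝ≥0∞) (ha : ∑' n, a n < 1)
    (hfa : ∑' n, ENNReal.ofReal (normWeight f K n) * a n < ⊤) :
    ∃ b : ℝ, 1 < b ∧ ∑' n, ENNReal.ofReal (tempered f K b n) * a n < 1 := by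
  set F : ℕ → ℕ → ℝ≥0∞ := fun k n =>
    min (ENNReal.ofReal ((1 + 1 / ((k : ℝ) + 1)) ^ n)) (ENNReal.ofReal (normWeight f K n)) * a n
  have hfin : ∀ n, a n ≠ ⊤ := fun n =>
    ((ENNReal.le_tsum n).trans_lt (ha.trans ENNReal.one_lt_top)).ne
  have hlim : Tendsto (fun k => ∑' n, F k n) atTop
      (nhds (∑' n, min 1 (ENNReal.ofReal (normWeight f K n)) * a n)) := by
    simp_rw [← MeasureTheory.lintegral_count]
    refine MeasureTheory.tendsto_lintegral_of_dominated_convergence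
      (fun n => ENNReal.ofReal (normWeight f K n) * a n) (fun n => measurable_of_countable _)
      (fun k => Eventually.of_forall fun n => mul_le_mul_left (min_le_right _ _) _) ?_
      (Eventually.of_forall fun n => ?_)
    · rw [MeasureTheory.lintegral_count]; exact hfa.ne
    · refine ENNReal.Tendsto.mul_const (Tendsto.min ?_ tendsto_const_nhds) (Or.inr (hfin n))
      have h1 : Tendsto (fun k : ℕ => (1 + 1 / ((k : ℝ) + 1)) ^ n) atTop (nhds ((1 + 0) ^ n)) :=
        (tendsto_const_nhds.add tendsto_one_div_add_atTop_nhds_zero_nat).pow n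
      simpa using ENNReal.tendsto_ofReal h1
  have hlt : ∑' n, min 1 (ENNReal.ofReal (normWeight f K n)) * a n < 1 := by
    refine lt_of_le_of_lt (ENNReal.tsum_le_tsum fun n => ?_) ha
    exact mul_le_of_le_one_left' (min_le_left _ _)
  obtain ⟨k, hk⟩ := (hlim.eventually_lt_const hlt).exists
  refine ⟨1 + 1 / ((k : ℝ) + 1), by simp; positivity, lt_of_le_of_lt ?_ hk⟩
  refine ENNReal.tsum_le_tsum fun n => mul_le_mul_left (le_min ?_ ?_) _
  · exact ENNReal.ofReal_le_ofReal (tempered_le_pow n)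
  · exact ENNReal.ofReal_le_ofReal (tempered_le_weight n)

theorem subexp_bound {f : ℕ → ℝ} (hpos : ∀ n, 0 < f n)
    (hlim : limsup (fun n : ℕ => ((Real.log (f n) / n : ℝ) : EReal)) atTop = 0)
    {b : ℝ} (hb : 1 < b) : ∃ C : ℝ, ∀ n, f n ≤ C * b ^ n := by
  have hlb : (0 : EReal) < (Real.log b : ℝ) := by exact_mod_cast Real.log_pos hb
  have hev : ∀ᶠ n : ℕ in atTop, f n ≤ b ^ n := by
    have := eventually_lt_of_limsup_lt (hlim ▸ hlb)
    filter_upwards [this, eventually_gt_atTop 0] with n hn hn0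
    have hn0' : (0 : ℝ) < n := by exact_mod_cast hn0
    have hn' : Real.log (f n) / n < Real.log b := by exact_mod_cast hn
    rw [div_lt_iff₀ hn0'] at hn'
    rw [← Real.log_le_log_iff (hpos n) (by positivity), Real.log_pow]
    linarith
  obtain ⟨N, hN⟩ := eventually_atTop.1 hev
  refine ⟨1 + ∑ n ∈ Finset.range N, f n, fun n => ?_⟩
  have hs : 0 ≤ ∑ n ∈ Finset.range N, f n := Finset.sum_nonneg fun n _ => (hpos n).le
  have hbn : 1 ≤ b ^ n := one_le_pow₀ hb.le
  rcases lt_or_ge n N with h | h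
  · have := Finset.single_le_sum (f := f) (fun n _ => (hpos n).le) (Finset.mem_range.2 h)
    nlinarith
  · have := hN n h
    nlinarith

/-- All hitting times have a finite `f`-moment as soon as one return time does. -/
theorem all_moments {f : ℕ → ℝ} (hpos : ∀ n, 0 < f n) (hmono : Monotone f) {K : ℝ} (hK : 0 < K)
    (hsub : ∀ x y : ℕ, 0 < x → 0 < y → f (x + y) ≤ K * f x * f y)
    (hlim : limsup (fun n : ℕ => ((Real.log (f n) / n : ℝ) : EReal)) atTop = 0)
    {P : E → E → ℝ≥0∞} (hP : IsStochastic P) (hI : IsIrreducible P) (hR : IsRecurrent P)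
    (i : E) (hi : momGen f P i i < ⊤) (k l : E) : momGen f P k l < ⊤ := by
  set g : ℕ → ℝ≥0∞ := fun n => ENNReal.ofReal (f n) with hgdef
  have hg : Monotone g := fun m n h => ENNReal.ofReal_le_ofReal (hmono h)
  have hgsub : ∀ m n, 0 < m → 0 < n → g (m + n) ≤ ENNReal.ofReal K * g m * g n := by
    intro m n hm hn
    rw [hgdef]
    simp only
    rw [← ENNReal.ofReal_mul hK.le, ← ENNReal.ofReal_mul (mul_pos hK (hpos m)).le]
    exact ENNReal.ofReal_le_ofReal (hsub m n hm hn)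
  have hto : ∀ j, mom g P i i j < ⊤ := by
    intro j
    by_cases hij : i = j
    · rw [← hij]; exact hi
    · exact mom_to_lt_top hg hI hij hi
  change mom g P l l k < ⊤
  by_cases hil : i = l
  · rw [← hil]; exact hto k
  refine mom_triangle hg ENNReal.ofReal_ne_top hgsub hI (Ne.symm hil) (hto k) ?_
  have hweight : ∀ n, 0 < n → ENNReal.ofReal (normWeight f K n) = ENNReal.ofReal K * g n := by
    intro n hn
    simp [normWeight, hn.ne', hgdef, ENNReal.ofReal_mul hK.le]
  have hW : ∀ t a, mom g P t a i < ⊤ →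
      mom (fun n => ENNReal.ofReal (normWeight f K n)) P t a i < ⊤ := by
    intro t a h
    refine (mom_mono (g' := fun n => ENNReal.ofReal K * g n) P t a i
      fun n hn => (hweight n hn).le).trans_lt ?_
    rw [mom_const_mul]
    exact ENNReal.mul_lt_top ENNReal.ofReal_lt_top h
  have hA := hW i l ((mom_le_hit g P i l i).trans_lt hi)
  obtain ⟨b, hb, hb1⟩ := exists_tempered_lt_one (f := f) (K := K) (fun n => hitAvoid P i l n i)
    (prob_return_lt_one hI hil (hR i)) hA
  have hb0 : 0 < b := by linarith
  obtain ⟨C, hC⟩ := subexp_bound hpos hlim hb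
  have hC0 : 0 < C := by have := (hpos 0).trans_le (hC 0); simpa using this
  have hfin : mom (fun n => ENNReal.ofReal (tempered f K b n)) P l l i < ⊤ := by
    refine mom_lt_top_of_contraction (fun n => ENNReal.ofReal_ne_top) ?_ hP hil hb1 ?_
    · intro m n _ _
      rw [← ENNReal.ofReal_mul (tempered_nonneg hpos hK hb0 m)]
      exact ENNReal.ofReal_le_ofReal (tempered_add_le hK hb0 hsub m n)
    · refine lt_of_le_of_lt (mom_mono _ _ _ _ fun n _ =>
        ENNReal.ofReal_le_ofReal (tempered_le_weight n)) (hW l i ?_)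
      exact mom_avoid_lt_top hg hI (Ne.symm hil) hi
  have hcomp : ∀ n, g n ≤ ENNReal.ofReal (C + 1 / K) * ENNReal.ofReal (tempered f K b n) := by
    intro n
    have hK' : 0 < 1 / K := by positivity
    rw [← ENNReal.ofReal_mul (by positivity)]
    refine ENNReal.ofReal_le_ofReal (le_tempered hpos hK hsub (fun n => ?_) ?_ n)
    · exact (hC n).trans (mul_le_mul_of_nonneg_right (by linarith) (by positivity))
    · rw [add_mul, one_div_mul_cancel hK.ne']
      have := mul_pos hC0 hK
      linarith
  refine (mom_mono _ _ _ _ fun n _ => hcomp n).trans_lt ?_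
  rw [mom_const_mul]
  exact ENNReal.mul_lt_top ENNReal.ofReal_lt_top hfin

/-- Two mutual hitting times with finite `f`-moments give a return time with one. -/
theorem return_moment {f : ℕ → ℝ} (hpos : ∀ n, 0 < f n) (hmono : Monotone f) {K : ℝ} (hK : 0 < K)
    (hsub : ∀ x y : ℕ, 0 < x → 0 < y → f (x + y) ≤ K * f x * f y)
    {P : E → E → ℝ≥0∞} (hI : IsIrreducible P)
    {i j : E} (hij : momGen f P i j < ⊤) (hji : momGen f P j i < ⊤) : momGen f P i i < ⊤ := by
  by_cases h : i = j
  · rwa [← h] at hij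
  refine mom_triangle (g := fun n => ENNReal.ofReal (f n)) (K := ENNReal.ofReal K)
    (fun m n h => ENNReal.ofReal_le_ofReal (hmono h)) ENNReal.ofReal_ne_top ?_ hI h hij hji
  intro m n hm hn
  rw [← ENNReal.ofReal_mul hK.le, ← ENNReal.ofReal_mul (mul_pos hK (hpos m)).le]
  exact ENNReal.ofReal_le_ofReal (hsub m n hm hn)

/-! ### The counterexample chain -/

/-- The transition matrix of a chain on `Option ℕ`. From `some (m + 1)` the chain counts down to
`some m`. From the hub `some 0` it jumps to `some (n + 2)` with probability `q * s n` and to `none`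
with probability `1 - q`; from `none` it jumps to `some (n + 1)` with probability `s n`. Thus both
kinds of excursion from the hub have length `n + 3` with probability `s n`, while a return
to `none` may involve several of them. -/
noncomputable def chain (q : ℝ≥0∞) (s : ℕ → ℝ≥0∞) : Option ℕ → Option ℕ → ℝ≥0∞
  | none, some (n + 1) => s n
  | none, _ => 0
  | some 0, none => 1 - q
  | some 0, some (n + 2) => q * s n
  | some 0, _ => 0
  | some (m + 1), x => if x = some m then 1 else 0

section chain

variable {q : ℝ≥0∞} {s : ℕ → ℝ≥0∞}

theorem tsum_option_eq (F : Option ℕ → ℝ≥0∞) : ∑' x, F x = F none + ∑' n, F (some n) := by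
  rw [← (Equiv.optionEquivSumPUnit.{0} ℕ).symm.tsum_eq F,
    Summable.tsum_sum ENNReal.summable ENNReal.summable]
  simp [add_comm]

theorem tsum_nat_succ (F : ℕ → ℝ≥0∞) : ∑' n, F n = F 0 + ∑' n, F (n + 1) :=
  tsum_eq_zero_add' ENNReal.summable

theorem chain_stochastic (hq : q ≤ 1) (hs : ∑' n, s n = 1) : IsStochastic (chain q s) := by
  intro x
  match x with
  | none =>
    rw [tsum_option_eq, tsum_nat_succ]
    simp [chain, hs]
  | some 0 =>
    rw [tsum_option_eq, tsum_nat_succ, tsum_nat_succ]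
    simp only [chain, zero_add, ENNReal.tsum_mul_left, hs, mul_one]
    exact tsub_add_cancel_of_le hq
  | some (m + 1) => simp [chain]

theorem reach_step {P : E → E → ℝ≥0∞} {x k t : E} (h : 0 < P x k)
    (hk : ∃ n, 0 < firstHit P k t n) : ∃ n, 0 < firstHit P x t n := by
  by_cases hkt : k = t
  · exact ⟨1, by rw [firstHit, hitAvoid_one, ← hkt]; exact h⟩
  · obtain ⟨n, hn⟩ := hk
    exact ⟨n + 1, (ENNReal.mul_pos h.ne' hn.ne').trans_le (hit_step_le P hkt n x)⟩

theorem reach_one {P : E → E → ℝ≥0∞} {x t : E} (h : 0 < P x t) : ∃ n, 0 < firstHit P x t n :=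
  ⟨1, by rw [firstHit, hitAvoid_one]; exact h⟩

theorem chain_irreducible (hq : q < 1) (hs : ∀ n, 0 < s n) : IsIrreducible (chain q s) := by
  have h0 : 0 < chain q s (some 0) none := by simpa [chain] using hq
  have hn : ∀ n, 0 < chain q s none (some (n + 1)) := fun n => by simpa [chain] using hs n
  have hd : ∀ n, 0 < chain q s (some (n + 1)) (some n) := fun n => by simp [chain]
  -- Every state leads to the hub, so it suffices to reach `t` from there.
  have aux : ∀ t, (∃ n, 0 < firstHit (chain q s) (some 0) t n) →
      ∀ x, ∃ n, 0 < firstHit (chain q s) x t n := by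
    intro t ht
    have hnat : ∀ m : ℕ, ∃ n, 0 < firstHit (chain q s) (some m) t n := by
      intro m
      induction m with
      | zero => exact ht
      | succ m ih => exact reach_step (hd m) ih
    intro x
    cases x with
    | none => exact reach_step (hn 0) (hnat 1)
    | some m => exact hnat m
  intro x t
  refine aux t ?_ x
  match t with
  | none => exact reach_one h0
  | some 0 => exact reach_step h0 (reach_step (hn 0) (reach_one (hd 0)))
  | some (m + 1) => exact reach_step h0 (reach_one (hn m))

theorem chain_down_step {t : Option ℕ} {m : ℕ} (hm : some m ≠ t) (n : ℕ) :
    hitAvoid (chain q s) t t (n + 1) (some (m + 1)) = hitAvoid (chain q s) t t n (some m) := by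
  classical
  rw [hitAvoid_succ, tsum_eq_single (some m)]
  · simp [chain, hm, hm.symm]
  · intro k hk; simp [chain, hk]

theorem chain_down_one (m n : ℕ) :
    hitAvoid (chain q s) (some m) (some m) n (some (m + 1)) = if n = 1 then 1 else 0 := by
  classical
  cases n with
  | zero => simp [hitAvoid_zero]
  | succ n =>
    rw [hitAvoid_succ, ENNReal.tsum_eq_zero.2 fun k => by by_cases h : k = some m <;> simp [chain, h]]
    simp [chain]

theorem chain_down (m d n : ℕ) :
    hitAvoid (chain q s) (some m) (some m) n (some (m + d + 1)) = if n = d + 1 then 1 else 0 := by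
  induction d generalizing n with
  | zero => exact chain_down_one m n
  | succ d ih =>
    cases n with
    | zero => simp [hitAvoid_zero]
    | succ n =>
      rw [show m + (d + 1) + 1 = (m + d + 1) + 1 by ring, chain_down_step (by simp; omega), ih]
      simp

theorem hit_zero_from_none (n : ℕ) :
    hitAvoid (chain q s) (some 0) (some 0) (n + 2) none = s n := by
  classical
  have h := fun d n => chain_down (q := q) (s := s) 0 d n
  simp only [zero_add] at h
  rw [hitAvoid_succ, tsum_option_eq, tsum_nat_succ]
  simp [chain, h]

theorem hit_zero_from_zero (n : ℕ) (hq : q ≤ 1) :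
    hitAvoid (chain q s) (some 0) (some 0) (n + 3) (some 0) = s n := by
  classical
  have h := fun n d => chain_down (q := q) (s := s) 0 d n
  simp only [zero_add] at h
  rw [hitAvoid_succ, tsum_option_eq, tsum_nat_succ, tsum_nat_succ, hit_zero_from_none]
  have h2 : ∀ b, hitAvoid (chain q s) (some 0) (some 0) (n + 2) (some (b + 2)) =
      if n = b then 1 else 0 := by
    intro b; rw [show b + 2 = (b + 1) + 1 from rfl, h]; simp
  simp [chain, h2, ← add_mul, tsub_add_cancel_of_le hq]

theorem hit_zero_from_zero_small {n : ℕ} (hn : n < 3) :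
    hitAvoid (chain q s) (some 0) (some 0) n (some 0) = 0 := by
  classical
  have h2 : ∀ b, hitAvoid (chain q s) (some 0) (some 0) 1 (some (b + 2)) = 0 := by
    intro b; rw [hitAvoid_one]; simp [chain]
  interval_cases n
  · rw [hitAvoid_zero]
  · rw [hitAvoid_one]; simp [chain]
  · rw [hitAvoid_succ, tsum_option_eq, tsum_nat_succ, tsum_nat_succ, hitAvoid_one]
    simp [chain, h2]

theorem hit_one_from_none (n : ℕ) :
    hitAvoid (chain q s) (some 1) (some 1) (n + 1) none = s n := by
  classical
  have h : ∀ n d, hitAvoid (chain q s) (some 1) (some 1) n (some (d + 2)) =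
      if n = d + 1 then 1 else 0 := by
    intro n d
    rw [← chain_down (q := q) (s := s) 1 d n, show 1 + d + 1 = d + 2 by ring]
  rw [hitAvoid_succ, tsum_option_eq, tsum_nat_succ, tsum_nat_succ]
  cases n <;> simp [chain, h]

theorem hit_one_from_zero (n : ℕ) (hq : q ≤ 1) :
    hitAvoid (chain q s) (some 1) (some 1) (n + 2) (some 0) = s n := by
  classical
  have h : ∀ n d, hitAvoid (chain q s) (some 1) (some 1) n (some (d + 2)) =
      if n = d + 1 then 1 else 0 := by
    intro n d
    rw [← chain_down (q := q) (s := s) 1 d n, show 1 + d + 1 = d + 2 by ring]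
  rw [hitAvoid_succ, tsum_option_eq, tsum_nat_succ, tsum_nat_succ, hit_one_from_none]
  simp [chain, h, ← add_mul, tsub_add_cancel_of_le hq]

theorem hit_one_from_zero_small {n : ℕ} (hn : n < 2) :
    hitAvoid (chain q s) (some 1) (some 1) n (some 0) = 0 := by
  interval_cases n
  · rw [hitAvoid_zero]
  · rw [hitAvoid_one]; simp [chain]

theorem tsum_shift {F : ℕ → ℝ≥0∞} (c : ℕ) (h : ∀ n < c, F n = 0) :
    ∑' n, F n = ∑' n, F (n + c) := by
  rw [← ENNReal.summable.sum_add_tsum_nat_add' (k := c),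
    Finset.sum_eq_zero fun n hn => h n (Finset.mem_range.1 hn), zero_add]

theorem chain_recurrent (hq : q < 1) (hs : ∀ n, 0 < s n) (hs1 : ∑' n, s n = 1) :
    IsRecurrent (chain q s) := by
  refine isRecurrent_of_state (chain_stochastic hq.le hs1) (chain_irreducible hq hs) (some 0) ?_
  simp only [firstHit]
  rw [tsum_shift 3 fun n hn => hit_zero_from_zero_small hn, ← hs1]
  exact tsum_congr fun n => hit_zero_from_zero n hq.le

/-- From the hub, one excursion of length `x + 3` avoiding `none` can precede any passage
to `none`. -/
theorem hit_none_loop (x n : ℕ) :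
    q * s x * hitAvoid (chain q s) none none n (some 0) ≤
      hitAvoid (chain q s) none none (n + x + 3) (some 0) := by
  have hd : ∀ m, hitAvoid (chain q s) none none (n + m) (some m) =
      hitAvoid (chain q s) none none n (some 0) := by
    intro m
    induction m with
    | zero => rfl
    | succ m ih => rw [← add_assoc, chain_down_step (by simp), ih]
  rw [← hd (x + 2)]
  exact hit_step_le (chain q s) (t := none) (k := some (x + 2)) (by simp) (n + (x + 2)) (some 0)

theorem hit_none_from_none (y n : ℕ) :
    s y * hitAvoid (chain q s) none none n (some 0) ≤
      hitAvoid (chain q s) none none (n + y + 2) none := by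
  have hd : ∀ m, hitAvoid (chain q s) none none (n + m) (some m) =
      hitAvoid (chain q s) none none n (some 0) := by
    intro m
    induction m with
    | zero => rfl
    | succ m ih => rw [← add_assoc, chain_down_step (by simp), ih]
  rw [← hd (y + 1)]
  exact hit_step_le (chain q s) (t := none) (k := some (y + 1)) (by simp) (n + (y + 1)) none

/-- If `f` is summable against the excursion law of the chain, but single terms of the `f`-moment of
the return time to `none` are unbounded, then `f` belongs to neither class. -/
theorem not_mem_of_chain {f : ℕ → ℝ} (hmono : Monotone f)
    (hq : q < 1) (hs : ∀ n, 0 < s n) (hs1 : ∑' n, s n = 1)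
    (hfin : ∑' n, ENNReal.ofReal (f (n + 3)) * s n < ⊤)
    (hinf : ∀ A : ℝ, ∃ n, ENNReal.ofReal A ≤
      ENNReal.ofReal (f n) * hitAvoid (chain q s) none none n none) :
    ¬ MemH f ∧ ¬ MemG f := by
  have htop : ¬ momGen f (chain q s) none none < ⊤ := by
    intro h
    obtain ⟨n, hn⟩ := hinf ((momGen f (chain q s) none none).toReal + 1)
    have h1 := hn.trans (ENNReal.le_tsum (f := fun n =>
      ENNReal.ofReal (f n) * hitAvoid (chain q s) none none n none) n)
    change _ ≤ momGen f (chain q s) none none at h1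
    rw [ENNReal.ofReal_le_iff_le_toReal h.ne] at h1
    linarith
  have hst := chain_stochastic hq.le hs1
  have hir := chain_irreducible hq hs
  have hre := chain_recurrent hq hs hs1
  refine ⟨fun h => htop ?_, fun h => htop ?_⟩
  · refine h (Option ℕ) (chain q s) hst hir hre (some 0) (some 1) ?_ ?_ none none
    · rw [momGen, tsum_shift 2]
      · refine lt_of_le_of_lt (ENNReal.tsum_le_tsum fun n => ?_) hfin
        rw [firstHit, hit_one_from_zero n hq.le]
        gcongr
        exact hmono (by omega)
      · intro n hn
        rw [firstHit, hit_one_from_zero_small hn, mul_zero]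
    · have : ∀ n, firstHit (chain q s) (some 1) (some 0) n = if n = 1 then 1 else 0 :=
        chain_down_one 0
      simp [momGen, this]
  · refine h (Option ℕ) (chain q s) hst hir hre (some 0) ?_ none
    rw [momGen, tsum_shift 3]
    · refine lt_of_le_of_lt (ENNReal.tsum_le_tsum fun n => ?_) hfin
      rw [firstHit, hit_zero_from_zero n hq.le]
    · intro n hn
      rw [firstHit, hit_zero_from_zero_small hn, mul_zero]

end chain

/-! ### Excursion laws violating each half of the criterion -/

/-- A fully supported law with finite `f`-moment that charges the points `x k` and `y k` with mass
at least of order `2 ^ (-k)` divided by the weight. -/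
theorem exists_law {f : ℕ → ℝ} (hpos : ∀ n, 0 < f n) (hmono : Monotone f) (x y : ℕ → ℕ) :
    ∃ s : ℕ → ℝ≥0∞, (∀ n, 0 < s n) ∧ ∑' n, s n = 1 ∧
      ∑' n, ENNReal.ofReal (f (n + 3)) * s n < ⊤ ∧
      ∃ c : ℝ≥0∞, c ≠ 0 ∧ c ≠ ⊤ ∧ ∀ k, c * 2⁻¹ ^ k ≤ ENNReal.ofReal (f (x k + 3)) * s (x k) ∧
        c * 2⁻¹ ^ k ≤ ENNReal.ofReal (f (y k + 3)) * s (y k) := by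
  set F : ℕ → ℝ≥0∞ := fun n => ENNReal.ofReal (f (n + 3)) with hF
  have hF0 : ∀ n, F n ≠ 0 := fun n => (ENNReal.ofReal_pos.2 (hpos _)).ne'
  have hFt : ∀ n, F n ≠ ⊤ := fun n => ENNReal.ofReal_ne_top
  set v : ℕ → ℕ → ℝ≥0∞ := fun k n => 2⁻¹ ^ k *
    ((if n = x k then 1 else 0) + (if n = y k then 1 else 0) + (if n = k then 1 else 0)) with hv
  set w : ℕ → ℝ≥0∞ := fun n => ∑' k, v k n with hw
  have hvw : ∀ k n, v k n ≤ w n := fun k n => ENNReal.le_tsum (f := fun k => v k n) k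
  have hwsum : ∑' n, w n < ⊤ := by
    rw [hw, ENNReal.tsum_comm]
    have : ∀ k, ∑' n, v k n = 2⁻¹ ^ k * (1 + 1 + 1) := by
      intro k
      simp only [hv]
      rw [ENNReal.tsum_mul_left, ENNReal.tsum_add, ENNReal.tsum_add]
      simp
    simp only [this, ENNReal.tsum_mul_right, ENNReal.tsum_geometric]
    refine ENNReal.mul_lt_top ?_ (by norm_num)
    simp
  have h2 : ∀ k : ℕ, (2⁻¹ : ℝ≥0∞) ^ k ≠ 0 := fun k => pow_ne_zero _ (by simp)
  have hwx : ∀ k, 2⁻¹ ^ k ≤ w (x k) := fun k => by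
    refine le_trans ?_ (hvw k (x k))
    simp only [hv, if_true, add_assoc]
    exact le_mul_of_one_le_right' le_self_add
  have hwy : ∀ k, 2⁻¹ ^ k ≤ w (y k) := fun k => by
    refine le_trans ?_ (hvw k (y k))
    simp only [hv, if_true]
    exact le_mul_of_one_le_right' (le_trans le_add_self le_self_add)
  have hwpos : ∀ n, w n ≠ 0 := fun n => by
    have h : 2⁻¹ ^ n ≤ w n := by
      refine le_trans ?_ (hvw n n)
      simp only [hv, if_true]
      exact le_mul_of_one_le_right' le_add_self
    exact fun h0 => h2 n (le_antisymm (h0 ▸ h) zero_le)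
  set Z := ∑' n, w n / F n with hZ
  have hZ0 : Z ≠ 0 := by
    have : w 0 / F 0 ≤ Z := ENNReal.le_tsum (f := fun n => w n / F n) 0
    intro h
    rw [h] at this
    exact (ENNReal.div_pos (hwpos 0) (hFt 0)).ne' (le_antisymm this zero_le)
  have hZt : Z ≠ ⊤ := by
    have : Z ≤ ∑' n, w n / F 0 := ENNReal.tsum_le_tsum fun n =>
      ENNReal.div_le_div_left (ENNReal.ofReal_le_ofReal (hmono (by omega))) _
    refine (this.trans_lt ?_).ne
    simp only [div_eq_mul_inv, ENNReal.tsum_mul_right]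
    exact ENNReal.mul_lt_top hwsum (ENNReal.inv_lt_top.2 (pos_iff_ne_zero.2 (hF0 0)))
  have hFs : ∀ n, F n * (w n / F n / Z) = Z⁻¹ * w n := by
    intro n
    rw [← mul_div_assoc, ENNReal.mul_div_cancel (hF0 n) (hFt n), div_eq_mul_inv, mul_comm]
  refine ⟨fun n => w n / F n / Z, fun n => ?_, ?_, ?_, Z⁻¹, ?_, ?_, fun k => ⟨?_, ?_⟩⟩
  · exact ENNReal.div_pos (ENNReal.div_pos (hwpos n) (hFt n)).ne' hZt
  · simp only [div_eq_mul_inv _ Z, ENNReal.tsum_mul_right]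
    exact ENNReal.mul_inv_cancel hZ0 hZt
  · change ∑' n, F n * (w n / F n / Z) < ⊤
    simp only [hFs, ENNReal.tsum_mul_left]
    exact ENNReal.mul_lt_top (ENNReal.inv_lt_top.2 (pos_iff_ne_zero.2 hZ0)) hwsum
  · exact ENNReal.inv_ne_zero.2 hZt
  · exact ENNReal.inv_ne_top.2 hZ0
  · change _ ≤ F (x k) * _
    rw [hFs]
    gcongr
    exact hwx k
  · change _ ≤ F (y k) * _
    rw [hFs]
    gcongr
    exact hwy k

theorem not_mem_of_not_submul {f : ℕ → ℝ} (hpos : ∀ n, 0 < f n) (hmono : Monotone f)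
    (h : ¬ ∃ K : ℝ, 0 < K ∧ ∀ x y : ℕ, 0 < x → 0 < y → f (x + y) ≤ K * f x * f y) :
    ¬ MemH f ∧ ¬ MemG f := by
  -- Enlarging `x` and `y` to at least `3` costs only a constant factor.
  have h3 : ∀ k : ℕ, ∃ x y : ℕ, (k : ℝ) * 4 ^ k * f (x + 3) * f (y + 3) ≤ f (x + y + 6) := by
    intro k
    have hc : ∀ x, 0 < x → f (max x 3) ≤ f 3 / f 1 * f x := by
      intro x hx
      have h1 := hpos 1
      have h31 : 1 ≤ f 3 / f 1 := (one_le_div h1).2 (hmono (by norm_num))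
      rcases le_total 3 x with h | h
      · rw [max_eq_left h]
        exact le_mul_of_one_le_left (hpos x).le h31
      · rw [max_eq_right h, div_mul_eq_mul_div, le_div_iff₀ h1]
        exact mul_le_mul_of_nonneg_left (hmono hx) (hpos 3).le
    have hR : 0 < f 3 / f 1 := div_pos (hpos _) (hpos _)
    set R := f 3 / f 1
    push Not at h
    obtain ⟨x, y, hx, hy, hxy⟩ := h ((k + 1 : ℝ) * 4 ^ k * (R * R)) (by positivity)
    refine ⟨max x 3 - 3, max y 3 - 3, ?_⟩
    rw [Nat.sub_add_cancel (le_max_right x 3), Nat.sub_add_cancel (le_max_right y 3),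
      show max x 3 - 3 + (max y 3 - 3) + 6 = max x 3 + max y 3 by omega]
    have hle : f (x + y) ≤ f (max x 3 + max y 3) :=
      hmono (add_le_add (le_max_left _ _) (le_max_left _ _))
    refine le_trans ?_ (hxy.le.trans hle)
    calc (k : ℝ) * 4 ^ k * f (max x 3) * f (max y 3)
        ≤ (k + 1 : ℝ) * 4 ^ k * (R * f x) * (R * f y) := by
          have := hpos (max x 3)
          have := hpos (max y 3)
          have := hpos x
          gcongr
          · linarith
          · exact hc x hx
          · exact hc y hy
      _ = _ := by ring
  choose x y hxy using h3
  obtain ⟨s, hs, hs1, hfin, c, hc0, hct, hc⟩ := exists_law hpos hmono x y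
  refine not_mem_of_chain (q := 2⁻¹) hmono ENNReal.one_half_lt_one hs hs1 hfin fun A => ?_
  set P := chain 2⁻¹ s with hP
  set D : ℝ≥0∞ := c * c * (2⁻¹ * (1 - 2⁻¹)) with hD
  have hq0 : (1 - 2⁻¹ : ℝ≥0∞) ≠ 0 := by rw [ENNReal.one_sub_inv_two]; simp
  have hqt : (1 - 2⁻¹ : ℝ≥0∞) ≠ ⊤ := ENNReal.sub_ne_top ENNReal.one_ne_top
  have hD0 : D ≠ 0 := mul_ne_zero (mul_ne_zero hc0 hc0) (mul_ne_zero (by simp) hq0)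
  have hDt : D ≠ ⊤ := ENNReal.mul_ne_top (ENNReal.mul_ne_top hct hct)
    (ENNReal.mul_ne_top (by simp) hqt)
  obtain ⟨k, hk⟩ := ENNReal.exists_nat_gt (ENNReal.div_ne_top ENNReal.ofReal_ne_top hD0 :
    ENNReal.ofReal A / D ≠ ⊤)
  have hk' : ENNReal.ofReal A ≤ k * D := (ENNReal.div_le_iff hD0 hDt).1 hk.le
  refine ⟨x k + y k + 6, hk'.trans ?_⟩
  have hhit : s (y k) * (2⁻¹ * s (x k) * (1 - 2⁻¹)) ≤
      hitAvoid P none none (x k + y k + 6) none := by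
    have h1 := hit_none_from_none (q := 2⁻¹) (s := s) (y k) (1 + x k + 3)
    have h2 := hit_none_loop (q := 2⁻¹) (s := s) (x k) 1
    rw [hitAvoid_one] at h2
    rw [show 1 + x k + 3 + y k + 2 = x k + y k + 6 by ring] at h1
    exact (mul_le_mul_right h2 _).trans h1
  have hf : (k : ℝ≥0∞) * 4 ^ k * ENNReal.ofReal (f (x k + 3)) * ENNReal.ofReal (f (y k + 3)) ≤
      ENNReal.ofReal (f (x k + y k + 6)) := by
    have := ENNReal.ofReal_le_ofReal (hxy k)
    rw [ENNReal.ofReal_mul (mul_nonneg (by positivity) (hpos _).le),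
      ENNReal.ofReal_mul (by positivity), ENNReal.ofReal_mul (by positivity),
      ENNReal.ofReal_pow (by norm_num), ENNReal.ofReal_natCast] at this
    simpa using this
  have h4 : (4 : ℝ≥0∞) ^ k * (2⁻¹ ^ k * 2⁻¹ ^ k) = 1 := by
    rw [← mul_pow, ← mul_pow]
    have : (4 : ℝ≥0∞) * (2⁻¹ * 2⁻¹) = 1 := by
      rw [← ENNReal.mul_inv (by simp) (by simp), show (2 : ℝ≥0∞) * 2 = 4 by norm_num]
      exact ENNReal.mul_inv_cancel (by simp) (by simp)
    rw [this, one_pow]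
  calc (k : ℝ≥0∞) * D
      = k * 4 ^ k * (c * 2⁻¹ ^ k) * (c * 2⁻¹ ^ k) * (2⁻¹ * (1 - 2⁻¹)) := by
        rw [hD]
        calc _ = (k : ℝ≥0∞) * (4 ^ k * (2⁻¹ ^ k * 2⁻¹ ^ k)) * (c * c) * (2⁻¹ * (1 - 2⁻¹)) := by
              rw [h4, mul_one]; ring
          _ = _ := by ring
    _ ≤ k * 4 ^ k * (ENNReal.ofReal (f (x k + 3)) * s (x k)) *
          (ENNReal.ofReal (f (y k + 3)) * s (y k)) * (2⁻¹ * (1 - 2⁻¹)) := by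
        exact mul_le_mul_left
          (mul_le_mul' (mul_le_mul_right (hc k).1 _) (hc k).2) _
    _ = (k * 4 ^ k * ENNReal.ofReal (f (x k + 3)) * ENNReal.ofReal (f (y k + 3))) *
          (s (y k) * (2⁻¹ * s (x k) * (1 - 2⁻¹))) := by ring
    _ ≤ _ := mul_le_mul' hf hhit

theorem not_mem_of_limsup {f : ℕ → ℝ} (hpos : ∀ n, 0 < f n) (hmono : Monotone f)
    (htop : Tendsto f atTop atTop)
    (h : limsup (fun n : ℕ => ((Real.log (f n) / n : ℝ) : EReal)) atTop ≠ 0) :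
    ¬ MemH f ∧ ¬ MemG f := by
  have h0 : 0 < limsup (fun n : ℕ => ((Real.log (f n) / n : ℝ) : EReal)) atTop := by
    refine lt_of_le_of_ne (le_limsup_of_frequently_le (Eventually.frequently ?_)) h.symm
    filter_upwards [htop.eventually_ge_atTop 1] with n hn
    have : 0 ≤ Real.log (f n) / n := div_nonneg (Real.log_nonneg hn) (Nat.cast_nonneg n)
    exact_mod_cast this
  obtain ⟨δ, hδ0, hδ⟩ := EReal.lt_iff_exists_real_btwn.1 h0
  have hδ0 : 0 < δ := by exact_mod_cast hδ0
  have hfreq : ∃ᶠ n : ℕ in atTop, Real.exp (δ * n) ≤ f n := by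
    refine ((frequently_lt_of_lt_limsup (by isBoundedDefault) hδ).and_eventually
      (eventually_gt_atTop 0)).mono ?_
    rintro n ⟨hn, hn0⟩
    have hn0 : (0 : ℝ) < n := by exact_mod_cast hn0
    have hn : δ < Real.log (f n) / n := by exact_mod_cast hn
    rw [lt_div_iff₀ hn0] at hn
    exact (Real.le_log_iff_exp_le (hpos n)).1 hn.le
  obtain ⟨s', hs', hs1', hfin', -⟩ := exists_law hpos hmono id id
  set r := Real.exp (-δ) with hr
  have hr0 : 0 < r := Real.exp_pos _
  have hr1 : r < 1 := by rw [hr, Real.exp_lt_one_iff]; linarith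
  set q := ENNReal.ofReal r with hq
  have hq1 : q < 1 := by rw [hq, ENNReal.ofReal_lt_one]; exact hr1
  have hq' : 1 - q = ENNReal.ofReal (1 - r) := by
    rw [ENNReal.ofReal_sub _ hr0.le, ENNReal.ofReal_one]
  set s : ℕ → ℝ≥0∞ := fun n => (if n = 0 then q else 0) + (1 - q) * s' n with hs
  have hs0 : q ≤ s 0 := by simp [hs]
  refine not_mem_of_chain (q := q) (s := s) hmono hq1 (fun n => ?_) ?_ ?_ fun A => ?_
  · refine lt_of_lt_of_le ?_ le_add_self
    exact ENNReal.mul_pos (tsub_pos_of_lt hq1).ne' (hs' n).ne'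
  · rw [hs, ENNReal.tsum_add, ENNReal.tsum_mul_left, hs1', tsum_ite_eq, mul_one]
    exact add_tsub_cancel_of_le hq1.le
  · simp only [hs, mul_add]
    rw [ENNReal.tsum_add]
    refine ENNReal.add_lt_top.2 ⟨?_, ?_⟩
    · rw [tsum_eq_single 0 (by intro n hn; simp [hn])]
      exact ENNReal.mul_lt_top ENNReal.ofReal_lt_top (by simp [hq])
    · simp only [mul_left_comm _ (1 - q), ENNReal.tsum_mul_left]
      exact ENNReal.mul_lt_top (by rw [hq']; exact ENNReal.ofReal_lt_top) hfin'
  · have hloop : ∀ N : ℕ, (q * q) ^ N * (1 - q) ≤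
        hitAvoid (chain q s) none none (3 * N + 1) (some 0) := by
      intro N
      induction N with
      | zero => rw [hitAvoid_one]; simp [chain]
      | succ N ih =>
        rw [pow_succ', mul_assoc]
        refine le_trans (mul_le_mul' (mul_le_mul_right hs0 q) ih) ?_
        exact hit_none_loop 0 (3 * N + 1)
    have hret : ∀ N : ℕ, ENNReal.ofReal (r * ((r * r) ^ N * (1 - r))) ≤
        hitAvoid (chain q s) none none (3 * N + 3) none := by
      intro N
      refine le_trans (le_trans (le_of_eq ?_) (mul_le_mul' hs0 (hloop N)))
        (hit_none_from_none 0 (3 * N + 1))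
      rw [ENNReal.ofReal_mul hr0.le, ENNReal.ofReal_mul (by positivity),
        ENNReal.ofReal_pow (by positivity), ENNReal.ofReal_mul hr0.le, hq']
    have hlim : Tendsto (fun n : ℕ => Real.exp (δ / 3 * n) * (r * (1 - r))) atTop atTop := by
      refine Tendsto.atTop_mul_const (mul_pos hr0 (by linarith)) ?_
      refine Real.tendsto_exp_atTop.comp ?_
      exact tendsto_natCast_atTop_atTop.const_mul_atTop (by positivity)
    obtain ⟨n, hn, hnA⟩ := (hfreq.and_eventually (hlim.eventually_ge_atTop A)).exists
    refine ⟨3 * (n / 3) + 3, le_trans ?_ (mul_le_mul_right (hret (n / 3)) _)⟩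
    rw [← ENNReal.ofReal_mul (hpos _).le]
    refine ENNReal.ofReal_le_ofReal (hnA.trans ?_)
    have hfn : Real.exp (δ * n) ≤ f (3 * (n / 3) + 3) := hn.trans (hmono (by omega))
    have hpow : Real.exp (-(2 * δ / 3 * n)) ≤ (r * r) ^ (n / 3) := by
      rw [hr, ← Real.exp_add, ← Real.exp_nat_mul, Real.exp_le_exp]
      have : ((n / 3 : ℕ) : ℝ) ≤ n / 3 := Nat.cast_div_le
      nlinarith
    calc Real.exp (δ / 3 * n) * (r * (1 - r))
        = Real.exp (δ * n) * (r * (Real.exp (-(2 * δ / 3 * n)) * (1 - r))) := by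
          rw [show δ / 3 * n = δ * n + -(2 * δ / 3 * n) by ring, Real.exp_add]; ring
      _ ≤ _ := by
          have : 0 ≤ 1 - r := by linarith
          have := (hpos (3 * (n / 3) + 3)).le
          gcongr

theorem stmt_0 (f : ℕ → ℝ) (hpos : ∀ n, 0 < f n) (hmono : Monotone f)
    (htop : Tendsto f atTop atTop) :
    List.TFAE
      [MemH f,
       MemG f,
       (∃ K : ℝ, 0 < K ∧ ∀ x y : ℕ, 0 < x → 0 < y → f (x + y) ≤ K * f x * f y) ∧
         limsup (fun n : ℕ => ((Real.log (f n) / n : ℝ) : EReal)) atTop = 0] := by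
  have hneg : ¬ ((∃ K : ℝ, 0 < K ∧ ∀ x y : ℕ, 0 < x → 0 < y → f (x + y) ≤ K * f x * f y) ∧
      limsup (fun n : ℕ => ((Real.log (f n) / n : ℝ) : EReal)) atTop = 0) →
      ¬ MemH f ∧ ¬ MemG f := by
    intro h
    rcases not_and_or.1 h with h | h
    · exact not_mem_of_not_submul hpos hmono h
    · exact not_mem_of_limsup hpos hmono htop h
  tfae_have 1 → 3 := fun h => by_contra fun h3 => (hneg h3).1 h
  tfae_have 2 → 3 := fun h => by_contra fun h3 => (hneg h3).2 h
  tfae_have 3 → 1 := by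
    rintro ⟨⟨K, hK, hsub⟩, hlim⟩ S _ P hP hI hR i j hij hji k l
    exact all_moments hpos hmono hK hsub hlim hP hI hR i
      (return_moment hpos hmono hK hsub hI hij hji) k l
  tfae_have 3 → 2 := by
    rintro ⟨⟨K, hK, hsub⟩, hlim⟩ S _ P hP hI hR i hi j
    exact all_moments hpos hmono hK hsub hlim hP hI hR i hi j j
  tfae_finish

end MCPaper
end

section
/- Let f : ℕ → (0,∞) be non-decreasing with f(n) → ∞, and suppose there exists K > 0 such that f(x+y) ≤ K·f(x)·f(y) for all positive integers x, y, and that limsup_{n→∞} (1/n)·log f(n) = 0. Then for every irreducible recurrent discrete-time Markov chain on a finite or countable state space, if E f(T_ii) < ∞ for some state i, then E f(T_jj) < ∞ for every state j. -/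
/-!
Fix `i ≠ j` and let `h_y(x)` be the law of the first hitting time of `y` from `x`, and `a`, `b`,
`d`, `r` the taboo laws: `i → i` avoiding `j`, `i → j` avoiding `i`, `j → i` avoiding `j` and
`j → j` avoiding `i`. Splitting at the first visit to `{i, j}` (`hit_decomp`) yields
`h_i(i) = a + b * h_i(j)`, `h_i(j) = d + r * h_i(j)`, `h_j(i) = b + a * h_j(i)` and
`h_j(j) = r + d * h_j(i)`, with `*` the convolution. As `f` is monotone, a nonzero convolution
with finite `f`-moment has factors with finite `f`-moment (`left_lt_top`, `right_lt_top`), so the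
hypothesis `E f(T_ii) < ∞` gives finite `f`-moments for `a`, `b`, `d`, `r` and `h_i(j)`. By
submultiplicativity of `f`, everything reduces to the finiteness of the `f`-moment of `h_j(i)`.

By recurrence and irreducibility `a` has total mass `< 1`, and `h_j(i)` solves the renewal equation
`h = b + a * h`. To bound its `f`-moment (`renewal_lt_top`), replace `f` by the comparable weight
`g(n) = sup_k f(n + k) e^{-δk}`. It is finite because `f` grows subexponentially, and it satisfies
`g(m + l) ≤ min(e^{δm}, K f(m)) g(l)`. By dominated convergence
`∑ a(m) min(e^{δm}, K f(m)) < 1` for small `δ`, so the truncated `g`-moments `G_N` of `h`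
satisfy `G_N ≤ C + θ G_N` with `θ < 1`, and hence are bounded.
-/

open Filter
open scoped ENNReal

namespace MCPaper

variable {E : Type*}

/-- Convolution of two sequences on `ℕ`. -/
noncomputable def conv (u v : ℕ → ℝ≥0∞) (n : ℕ) : ℝ≥0∞ :=
  ∑ p ∈ Finset.HasAntidiagonal.antidiagonal n, u p.1 * v p.2

lemma tsum_conv (w u v : ℕ → ℝ≥0∞) :
    ∑' n, w n * conv u v n = ∑' m, ∑' l, w (m + l) * (u m * v l) := by
  rw [← ENNReal.tsum_prod (f := fun m l => w (m + l) * (u m * v l)),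
    ← Finset.HasAntidiagonal.sigmaAntidiagonalEquivProd.tsum_eq
      (fun p : ℕ × ℕ => w (p.1 + p.2) * (u p.1 * v p.2)),
    ENNReal.tsum_sigma']
  refine tsum_congr fun n => ?_
  rw [conv, Finset.mul_sum,
    ← Finset.tsum_subtype (Finset.HasAntidiagonal.antidiagonal n) (fun p => w n * (u p.1 * v p.2))]
  refine tsum_congr fun p => ?_
  have hp : p.1.1 + p.1.2 = n := Finset.HasAntidiagonal.mem_antidiagonal.1 p.2
  simp [hp]

/-! ### First-entrance decomposition -/

lemma hitAvoid_le_one {P : E → E → ℝ≥0∞} (hP : IsStochastic P) (t a : E) :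
    ∀ n x, hitAvoid P t a n x ≤ 1
  | 0, x => by simp [hitAvoid]
  | 1, x => by
      rw [hitAvoid, ← hP x]
      exact ENNReal.le_tsum t
  | n + 2, x => by
      rw [hitAvoid, ← hP x]
      refine ENNReal.tsum_le_tsum fun k => ?_
      split_ifs
      · exact zero_le
      · exact mul_le_of_le_one_right' (hitAvoid_le_one hP t a (n + 1) k)

/-- Decomposition of the hitting time of `j` at the first visit to `{i, j}`. -/
lemma hit_decomp_s2 (P : E → E → ℝ≥0∞) {i j : E} (hij : i ≠ j) :
    ∀ n x, hitAvoid P j j n x =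
      hitAvoid P j i n x +
        conv (fun m => hitAvoid P i j m x) (fun l => hitAvoid P j j l i) n
  | 0, x => by simp [hitAvoid, conv]
  | 1, x => by simp [hitAvoid, conv, Finset.Nat.antidiagonal_succ]
  | n + 2, x => by
      classical
      have key : conv (fun m => hitAvoid P i j m x) (fun l => hitAvoid P j j l i) (n + 2) =
          P x i * hitAvoid P j j (n + 1) i +
          ∑' k, if k = i ∨ k = j then 0 else P x k *
            conv (fun m => hitAvoid P i j m k) (fun l => hitAvoid P j j l i) (n + 1) := by
        have h2 : ∀ k, (if k = i ∨ k = j then 0 else P x k *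
            conv (fun m => hitAvoid P i j m k) (fun l => hitAvoid P j j l i) (n + 1)) =
            ∑ p ∈ Finset.HasAntidiagonal.antidiagonal n, (if k = i ∨ k = j then 0 else
              P x k * hitAvoid P i j (p.1 + 1) k) * hitAvoid P j j p.2 i := by
          intro k
          split_ifs
          · simp
          · rw [conv, Finset.Nat.sum_antidiagonal_succ]
            simp [hitAvoid, Finset.mul_sum, mul_assoc]
        simp_rw [h2]
        rw [Summable.tsum_finsetSum (fun _ _ => ENNReal.summable)]
        simp_rw [ENNReal.tsum_mul_right]
        rw [conv, Finset.Nat.sum_antidiagonal_succ, Finset.Nat.sum_antidiagonal_succ]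
        simp [hitAvoid]
      rw [key, hitAvoid, hitAvoid]
      have h1 : P x i * hitAvoid P j j (n + 1) i =
          ∑' k, if k = i then P x k * hitAvoid P j j (n + 1) k else 0 := by
        rw [tsum_eq_single i (by intro k hk; simp [hk])]
        simp
      rw [h1, ← ENNReal.tsum_add, ← ENNReal.tsum_add]
      refine tsum_congr fun k => ?_
      by_cases hki : k = i
      · subst hki; simp [hij]
      · by_cases hkj : k = j
        · subst hkj; simp [hki]
        · simp only [hki, hkj, or_self, if_false, zero_add]
          rw [← mul_add, ← hit_decomp_s2 P hij (n + 1) k]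

/-! ### Weighted moments of convolutions -/

lemma left_lt_top {F u v : ℕ → ℝ≥0∞} (hF : Monotone F) {l : ℕ} (hv : v l ≠ 0)
    (h : ∑' n, F n * conv u v n < ⊤) : ∑' n, F n * u n < ⊤ := by
  rw [tsum_conv] at h
  have h1 : (∑' n, F n * u n) * v l ≤ ∑' m, ∑' l, F (m + l) * (u m * v l) := by
    rw [← ENNReal.tsum_mul_right]
    refine ENNReal.tsum_le_tsum fun m => ?_
    refine le_trans ?_ (ENNReal.le_tsum l)
    rw [mul_assoc]
    gcongr
    exact hF (Nat.le_add_right _ _)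
  exact ENNReal.lt_top_of_mul_ne_top_left (h1.trans_lt h).ne hv

lemma conv_comm (u v : ℕ → ℝ≥0∞) (n : ℕ) : conv u v n = conv v u n := by
  rw [conv, conv, ← Finset.Nat.sum_antidiagonal_swap]
  simp [mul_comm]

lemma right_lt_top {F u v : ℕ → ℝ≥0∞} (hF : Monotone F) {m : ℕ} (hu : u m ≠ 0)
    (h : ∑' n, F n * conv u v n < ⊤) : ∑' n, F n * v n < ⊤ := by
  simp_rw [conv_comm u v] at h
  exact left_lt_top hF hu h

lemma conv_lt_top {F u v : ℕ → ℝ≥0∞} {K : ℝ≥0∞} (hK : K ≠ ⊤)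
    (hsub : ∀ x y : ℕ, 0 < x → 0 < y → F (x + y) ≤ K * F x * F y)
    (hu0 : u 0 = 0) (hv0 : v 0 = 0)
    (hu : ∑' n, F n * u n < ⊤) (hv : ∑' n, F n * v n < ⊤) :
    ∑' n, F n * conv u v n < ⊤ := by
  rw [tsum_conv]
  refine lt_of_le_of_lt (b := K * ((∑' n, F n * u n) * ∑' n, F n * v n)) ?_
    (ENNReal.mul_lt_top hK.lt_top (ENNReal.mul_lt_top hu hv))
  rw [← ENNReal.tsum_mul_right, ← ENNReal.tsum_mul_left]
  refine ENNReal.tsum_le_tsum fun m => ?_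
  rw [← ENNReal.tsum_mul_left, ← ENNReal.tsum_mul_left]
  refine ENNReal.tsum_le_tsum fun l => ?_
  rcases Nat.eq_zero_or_pos m with rfl | hm
  · simp [hu0]
  rcases Nat.eq_zero_or_pos l with rfl | hl
  · simp [hv0]
  calc F (m + l) * (u m * v l) ≤ K * F m * F l * (u m * v l) := by gcongr; exact hsub m l hm hl
    _ = K * (F m * u m * (F l * v l)) := by ring

/-! ### The renewal equation with a defective step law -/

/-- The factor `e^{δ m}`, valued in `ℝ≥0∞`. -/
noncomputable def ee (δ : ℝ) (m : ℕ) : ℝ≥0∞ := ENNReal.ofReal (Real.exp (δ * m))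

/-- The regularised weight `sup_k F (n + k) e^{-δ k}`, which grows at rate at most `e^δ`. -/
noncomputable def reg (F : ℕ → ℝ≥0∞) (δ : ℝ) (n : ℕ) : ℝ≥0∞ := ⨆ k, F (n + k) * ee (-δ) k

lemma ee_add (δ : ℝ) (m k : ℕ) : ee δ (m + k) = ee δ m * ee δ k := by
  rw [ee, ee, ee, ← ENNReal.ofReal_mul (Real.exp_nonneg _), ← Real.exp_add]
  push_cast
  ring_nf

lemma ee_mul_neg (δ : ℝ) (m : ℕ) : ee δ m * ee (-δ) m = 1 := by
  rw [ee, ee, ← ENNReal.ofReal_mul (Real.exp_nonneg _), ← Real.exp_add]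
  simp

lemma le_reg (F : ℕ → ℝ≥0∞) (δ : ℝ) (n : ℕ) : F n ≤ reg F δ n := by
  refine le_trans ?_ (le_iSup _ 0)
  simp [ee]

lemma reg_add_le_exp (F : ℕ → ℝ≥0∞) (δ : ℝ) (m l : ℕ) :
    reg F δ (m + l) ≤ ee δ m * reg F δ l := by
  refine iSup_le fun k => ?_
  calc F (m + l + k) * ee (-δ) k
      = ee δ m * (F (l + (m + k)) * ee (-δ) (m + k)) := by
        rw [ee_add, show m + l + k = l + (m + k) by ring]
        calc _ = (ee δ m * ee (-δ) m) * (F (l + (m + k)) * ee (-δ) k) := by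
              rw [ee_mul_neg, one_mul]
          _ = _ := by ring
    _ ≤ _ := by
        gcongr
        exact le_iSup (fun k => F (l + k) * ee (-δ) k) (m + k)

lemma reg_add_le_mul {F : ℕ → ℝ≥0∞} {K : ℝ≥0∞}
    (hsub : ∀ x y : ℕ, 0 < x → 0 < y → F (x + y) ≤ K * F x * F y) (δ : ℝ) {m l : ℕ}
    (hm : 0 < m) (hl : 0 < l) : reg F δ (m + l) ≤ K * F m * reg F δ l := by
  refine iSup_le fun k => ?_
  calc F (m + l + k) * ee (-δ) k ≤ K * F m * F (l + k) * ee (-δ) k := by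
        gcongr
        rw [add_assoc]
        exact hsub m (l + k) hm (by omega)
    _ = K * F m * (F (l + k) * ee (-δ) k) := by ring
    _ ≤ _ := by
        gcongr
        exact le_iSup (fun k => F (l + k) * ee (-δ) k) k

lemma reg_le {F : ℕ → ℝ≥0∞} {K : ℝ≥0∞}
    (hsub : ∀ x y : ℕ, 0 < x → 0 < y → F (x + y) ≤ K * F x * F y) (δ : ℝ) {n : ℕ}
    (hn : 0 < n) : reg F δ n ≤ (1 + K * reg F δ 0) * F n := by
  refine iSup_le fun k => ?_
  rcases Nat.eq_zero_or_pos k with rfl | hk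
  · rw [add_mul]
    simp [ee]
  calc F (n + k) * ee (-δ) k ≤ K * F n * F k * ee (-δ) k := by
        gcongr
        exact hsub n k hn hk
    _ = K * (F (0 + k) * ee (-δ) k) * F n := by rw [zero_add]; ring
    _ ≤ K * reg F δ 0 * F n := by
        gcongr
        exact le_iSup (fun k => F (0 + k) * ee (-δ) k) k
    _ ≤ _ := by
        gcongr
        exact le_add_self

/-- For a defective law `a` with finite `F`-moment, the mass stays below `1` after the weight
`min (e^{δ m}, K F(m))` is inserted, if `δ` is small. -/
lemma exists_delta {F a : ℕ → ℝ≥0∞} {K : ℝ≥0∞} (hK : K ≠ ⊤)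
    (ha : ∑' n, F n * a n < ⊤) (ha1 : ∑' n, a n < 1) :
    ∃ δ : ℝ, 0 < δ ∧ ∑' m, min (ee δ m) (K * F m) * a m < 1 := by
  have hlim : Tendsto (fun q : ℕ => ∑' m, min (ee (1 / ((q : ℝ) + 1)) m) (K * F m) * a m) atTop
      (nhds (∑' m, min 1 (K * F m) * a m)) := by
    simp_rw [← MeasureTheory.lintegral_count]
    refine MeasureTheory.tendsto_lintegral_of_dominated_convergence (fun m => K * F m * a m)
      (fun q => measurable_of_countable _) (fun q => MeasureTheory.ae_of_all _ fun m => ?_) ?_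
      (MeasureTheory.ae_of_all _ fun m => ?_)
    · exact mul_le_mul_left (min_le_right _ _) _
    · rw [MeasureTheory.lintegral_count]
      simp_rw [mul_assoc]
      rw [ENNReal.tsum_mul_left]
      exact (ENNReal.mul_lt_top hK.lt_top ha).ne
    · refine ENNReal.Tendsto.mul_const (Tendsto.min ?_ tendsto_const_nhds) (Or.inr ?_)
      · have h0 : Tendsto (fun q : ℕ => Real.exp (1 / ((q : ℝ) + 1) * m)) atTop (nhds 1) := by
          have h1 := (tendsto_one_div_add_atTop_nhds_zero_nat (𝕜 := ℝ)).mul_const (m : ℝ)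
          rw [zero_mul] at h1
          simpa [Function.comp_def] using (Real.continuous_exp.tendsto 0).comp h1
        simpa [ee] using ENNReal.tendsto_ofReal h0
      · exact ((ENNReal.le_tsum m).trans_lt (ha1.trans ENNReal.one_lt_top)).ne
  have hlt : ∑' m, min 1 (K * F m) * a m < 1 := by
    refine lt_of_le_of_lt (ENNReal.tsum_le_tsum fun m => ?_) ha1
    exact mul_le_of_le_one_left' (min_le_left _ _)
  obtain ⟨q, hq⟩ := (hlim.eventually (gt_mem_nhds hlt)).exists
  exact ⟨_, by positivity, hq⟩

lemma renewal_lt_top {F a b h : ℕ → ℝ≥0∞} {K : ℝ≥0∞} (hK : K ≠ ⊤)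
    (hsub : ∀ x y : ℕ, 0 < x → 0 < y → F (x + y) ≤ K * F x * F y)
    (hFtop : ∀ n, F n ≠ ⊤)
    (hexp : ∀ δ : ℝ, 0 < δ → reg F δ 0 ≠ ⊤)
    (ha0 : a 0 = 0) (hb0 : b 0 = 0) (hh0 : h 0 = 0) (hh : ∀ n, h n ≠ ⊤)
    (ha : ∑' n, F n * a n < ⊤) (hb : ∑' n, F n * b n < ⊤) (ha1 : ∑' n, a n < 1)
    (hren : ∀ n, h n = b n + conv a h n) : ∑' n, F n * h n < ⊤ := by
  obtain ⟨δ, hδ, hθ⟩ := exists_delta hK ha ha1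
  set θ := ∑' m, min (ee δ m) (K * F m) * a m with hθdef
  set C := 1 + K * reg F δ 0 with hC
  have hCtop : C ≠ ⊤ := by
    simp [hC, ENNReal.mul_eq_top, hK, hexp δ hδ]
  have hbg : ∑' n, reg F δ n * b n ≤ C * ∑' n, F n * b n := by
    rw [← ENNReal.tsum_mul_left]
    refine ENNReal.tsum_le_tsum fun n => ?_
    rcases Nat.eq_zero_or_pos n with rfl | hn
    · simp [hb0]
    rw [← mul_assoc]
    gcongr
    exact reg_le hsub δ hn
  set B := C * ∑' n, F n * b n with hB
  have hBtop : B ≠ ⊤ := (ENNReal.mul_lt_top hCtop.lt_top hb).ne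
  -- the truncated moments of `h` for the regularised weight are bounded uniformly in `N`
  have hG : ∀ N : ℕ, ∑ n ∈ Finset.range N, reg F δ n * h n ≤ B / (1 - θ) := by
    intro N
    set w : ℕ → ℝ≥0∞ := fun n => if n < N then reg F δ n else 0 with hw
    have hwle : ∀ n, w n ≤ reg F δ n := by
      intro n; simp only [hw]; split_ifs
      · exact le_rfl
      · exact zero_le
    have hGw : ∑ n ∈ Finset.range N, reg F δ n * h n = ∑' n, w n * h n := by
      rw [tsum_eq_sum (s := Finset.range N)]
      · refine Finset.sum_congr rfl fun n hn => ?_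
        simp [hw, Finset.mem_range.1 hn]
      · intro n hn
        simp only [Finset.mem_range] at hn
        simp [hw, hn]
    have hfin : ∑ n ∈ Finset.range N, reg F δ n * h n ≠ ⊤ := by
      refine (ENNReal.sum_lt_top.2 fun n _ => ENNReal.mul_lt_top ?_ (hh n).lt_top).ne
      rcases Nat.eq_zero_or_pos n with rfl | hn
      · exact (hexp δ hδ).lt_top
      · exact (reg_le hsub δ hn).trans_lt (ENNReal.mul_lt_top hCtop.lt_top (hFtop n).lt_top)
    rw [hGw] at hfin ⊢
    set G := ∑' n, w n * h n with hGdef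
    have hineq : G ≤ B + θ * G := by
      calc G = ∑' n, (w n * b n + w n * conv a h n) := by
            rw [hGdef]
            refine tsum_congr fun n => ?_
            rw [← mul_add, ← hren n]
        _ = ∑' n, w n * b n + ∑' m, ∑' l, w (m + l) * (a m * h l) := by
            rw [ENNReal.tsum_add, tsum_conv]
        _ ≤ B + θ * G := by
            refine add_le_add (le_trans (ENNReal.tsum_le_tsum fun n => ?_) hbg) ?_
            · gcongr
              exact hwle n
            · rw [hθdef, ← ENNReal.tsum_mul_right]
              refine ENNReal.tsum_le_tsum fun m => ?_
              rw [hGdef, ← ENNReal.tsum_mul_left]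
              refine ENNReal.tsum_le_tsum fun l => ?_
              rcases Nat.eq_zero_or_pos m with rfl | hm
              · simp [ha0]
              rcases Nat.eq_zero_or_pos l with rfl | hl
              · simp [hh0]
              have hstep : w (m + l) ≤ min (ee δ m) (K * F m) * w l := by
                by_cases hml : m + l < N
                · have hlN : l < N := by omega
                  simp only [hw, hml, hlN, if_true]
                  rcases min_choice (ee δ m) (K * F m) with hmin | hmin <;> rw [hmin]
                  · exact reg_add_le_exp F δ m l
                  · exact reg_add_le_mul hsub δ hm hl
                · simp [hw, hml]
              calc w (m + l) * (a m * h l) ≤ min (ee δ m) (K * F m) * w l * (a m * h l) := by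
                    gcongr
                _ = _ := by ring
    have hθtop : θ ≠ ⊤ := (hθ.trans ENNReal.one_lt_top).ne
    rw [ENNReal.le_div_iff_mul_le (Or.inl (tsub_pos_of_lt hθ).ne')
      (Or.inl (ne_top_of_le_ne_top ENNReal.one_ne_top tsub_le_self)),
      ENNReal.mul_sub (fun _ _ => hfin), mul_one, tsub_le_iff_right, mul_comm G θ]
    exact hineq
  have hle : ∑' n, F n * h n ≤ B / (1 - θ) := by
    refine le_trans (ENNReal.tsum_le_tsum fun n => ?_) (ENNReal.tsum_le_of_sum_range_le hG)
    gcongr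
    exact le_reg F δ n
  exact hle.trans_lt (ENNReal.div_lt_top hBtop (tsub_pos_of_lt hθ).ne')

lemma reg_zero_ne_top (f : ℕ → ℝ) (hpos : ∀ n, 0 < f n) (hmono : Monotone f)
    (hlog : limsup (fun n : ℕ => ((Real.log (f n) / n : ℝ) : EReal)) atTop = 0)
    (δ : ℝ) (hδ : 0 < δ) : reg (fun n => ENNReal.ofReal (f n)) δ 0 ≠ ⊤ := by
  have hev : ∀ᶠ n : ℕ in atTop, ((Real.log (f n) / n : ℝ) : EReal) < (δ : EReal) :=
    eventually_lt_of_limsup_lt (by rw [hlog]; exact_mod_cast hδ)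
  obtain ⟨N, hN⟩ := eventually_atTop.1 (hev.and (eventually_gt_atTop 0))
  have hb : reg (fun n => ENNReal.ofReal (f n)) δ 0 ≤ ENNReal.ofReal (f N) + 1 := by
    refine iSup_le fun k => ?_
    rw [zero_add, ee, ← ENNReal.ofReal_mul (hpos k).le]
    rcases le_total k N with hk | hk
    · refine le_trans (ENNReal.ofReal_le_ofReal ?_) le_self_add
      have h1 : Real.exp (-δ * k) ≤ 1 := by
        rw [Real.exp_le_one_iff]
        have : 0 ≤ δ * k := by positivity
        linarith
      exact (mul_le_of_le_one_right (hpos k).le h1).trans (hmono hk)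
    · refine le_trans ?_ le_add_self
      rw [← ENNReal.ofReal_one]
      refine ENNReal.ofReal_le_ofReal ?_
      obtain ⟨h1, h2⟩ := hN k hk
      have h3 : Real.log (f k) / k < δ := by exact_mod_cast h1
      have h4 : (0 : ℝ) < k := by exact_mod_cast h2
      rw [div_lt_iff₀ h4] at h3
      calc f k * Real.exp (-δ * k) = Real.exp (Real.log (f k) + -δ * k) := by
            rw [Real.exp_add, Real.exp_log (hpos k)]
        _ ≤ 1 := by
            rw [Real.exp_le_one_iff]
            linarith
  exact ne_top_of_le_ne_top (by simp) hb

theorem stmt_2 (f : ℕ → ℝ) (hpos : ∀ n, 0 < f n) (hmono : Monotone f)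
    (htop : Tendsto f atTop atTop)
    (K : ℝ) (hK : 0 < K)
    (hsub : ∀ x y : ℕ, 0 < x → 0 < y → f (x + y) ≤ K * f x * f y)
    (hlog : limsup (fun n : ℕ => ((Real.log (f n) / n : ℝ) : EReal)) atTop = 0)
    (S : Type*) [Countable S] (P : S → S → ℝ≥0∞)
    (hP : IsStochastic P) (hirr : IsIrreducible P) (hrec : IsRecurrent P)
    (i : S) (hi : momGen f P i i < ⊤) :
    ∀ j : S, momGen f P j j < ⊤ := by
  intro j
  rcases eq_or_ne i j with rfl | hij
  · exact hi
  set F : ℕ → ℝ≥0∞ := fun n => ENNReal.ofReal (f n) with hFdef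
  have hFmono : Monotone F := fun x y hxy => ENNReal.ofReal_le_ofReal (hmono hxy)
  have hFsub : ∀ x y : ℕ, 0 < x → 0 < y → F (x + y) ≤ ENNReal.ofReal K * F x * F y := by
    intro x y hx hy
    simp only [hFdef]
    rw [← ENNReal.ofReal_mul hK.le, ← ENNReal.ofReal_mul (mul_pos hK (hpos x)).le]
    exact ENNReal.ofReal_le_ofReal (hsub x y hx hy)
  set a : ℕ → ℝ≥0∞ := fun n => hitAvoid P i j n i with ha
  set b : ℕ → ℝ≥0∞ := fun n => hitAvoid P j i n i with hb
  set d : ℕ → ℝ≥0∞ := fun n => hitAvoid P i j n j with hd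
  set r : ℕ → ℝ≥0∞ := fun n => hitAvoid P j i n j with hr
  set hji : ℕ → ℝ≥0∞ := fun n => hitAvoid P i i n j with hhji
  set hij' : ℕ → ℝ≥0∞ := fun n => hitAvoid P j j n i with hhij
  have e1 : ∀ n, hitAvoid P i i n i = a n + conv b hji n := fun n => hit_decomp_s2 P hij.symm n i
  have e2 : ∀ n, hji n = d n + conv r hji n := fun n => hit_decomp_s2 P hij.symm n j
  have e3 : ∀ n, hij' n = b n + conv a hij' n := fun n => hit_decomp_s2 P hij n i
  have e4 : ∀ n, hitAvoid P j j n j = r n + conv d hij' n := fun n => hit_decomp_s2 P hij n j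
  obtain ⟨l, hl⟩ := hirr j i
  have hl : hji l ≠ 0 := hl.ne'
  -- if `b` vanished, the renewal equation with `a 0 = 0` would force the hitting law to vanish
  obtain ⟨m, hm⟩ : ∃ m, b m ≠ 0 := by
    by_contra! hb0
    have hz : ∀ n, hij' n = 0 := by
      intro n
      induction n using Nat.strong_induction_on with
      | _ n ih =>
        rw [e3, hb0, zero_add, conv]
        refine Finset.sum_eq_zero fun p hp => ?_
        rw [Finset.HasAntidiagonal.mem_antidiagonal] at hp
        rcases Nat.eq_zero_or_pos p.1 with h0 | h0
        · rw [h0]; simp [ha, hitAvoid]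
        · rw [ih p.2 (by omega), mul_zero]
    obtain ⟨n, hn⟩ := hirr i j
    exact hn.ne' (hz n)
  have hi' : ∑' n, F n * a n + ∑' n, F n * conv b hji n < ⊤ := by
    rw [← ENNReal.tsum_add]
    simp_rw [← mul_add, ← e1]
    exact hi
  obtain ⟨hFa, hFbh⟩ := ENNReal.add_lt_top.1 hi'
  have hFb := left_lt_top hFmono hl hFbh
  have hFji := right_lt_top hFmono hm hFbh
  have h2 : ∑' n, F n * d n + ∑' n, F n * conv r hji n < ⊤ := by
    rw [← ENNReal.tsum_add]
    simp_rw [← mul_add, ← e2]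
    exact hFji
  obtain ⟨hFd, hFrh⟩ := ENNReal.add_lt_top.1 h2
  have hFr := left_lt_top hFmono hl hFrh
  have ha1 : ∑' n, a n < 1 := by
    have hone : ∑' n, a n + ∑' n, conv b hji n = 1 := by
      rw [← ENNReal.tsum_add]
      simp_rw [← e1]
      exact hrec i
    have hc : ∑' n, conv b hji n ≠ 0 := by
      intro hz
      rw [ENNReal.tsum_eq_zero] at hz
      have hz' := hz (m + l)
      rw [conv, Finset.sum_eq_zero_iff] at hz'
      have := hz' (m, l) (by simp)
      exact mul_ne_zero hm hl this
    have hfin : ∑' n, a n ≠ ⊤ :=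
      ne_top_of_le_ne_top ENNReal.one_ne_top (hone ▸ le_self_add)
    calc ∑' n, a n < ∑' n, a n + ∑' n, conv b hji n := ENNReal.lt_add_right hfin hc
      _ = 1 := hone
  have hFij : ∑' n, F n * hij' n < ⊤ :=
    renewal_lt_top ENNReal.ofReal_ne_top hFsub (fun n => ENNReal.ofReal_ne_top)
      (reg_zero_ne_top f hpos hmono hlog) (by simp [ha, hitAvoid]) (by simp [hb, hitAvoid])
      (by simp [hhij, hitAvoid])
      (fun n => ne_top_of_le_ne_top ENNReal.one_ne_top (hitAvoid_le_one hP _ _ _ _))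
      hFa hFb ha1 e3
  have hdec : momGen f P j j = ∑' n, F n * r n + ∑' n, F n * conv d hij' n := by
    rw [← ENNReal.tsum_add]
    simp_rw [← mul_add, ← e4]
    rfl
  rw [hdec]
  exact ENNReal.add_lt_top.2 ⟨hFr, conv_lt_top ENNReal.ofReal_ne_top hFsub
    (by simp [hd, hitAvoid]) (by simp [hhij, hitAvoid]) hFd hFij⟩

end MCPaper
end

section
/- Let f : ℕ → (0,∞) be non-decreasing with f(n) → ∞, and suppose f belongs to the class G. Then limsup_{n→∞} (1/n)·log f(n) = 0. -/
/-!
A two-state chain suffices. From state `true` the chain stays put with probability `p` and moves to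
`false` with probability `q = 1 - p`; from `false` it returns to `true` at once. The return time of
`true` is at most `2`, so all its moments are finite, while the return time of `false` equals
`n + 2` with probability `p ^ n * q`. If `limsup (log f n) / n > c > 0`, take `p = exp (-c)`: then
`f n * p ^ n ≥ 1` for infinitely many `n`, so the terms of `E f(T)` for the return time `T` of
`false` do not tend to `0` and this moment is infinite, contradicting `MemG f`. The opposite
inequality `0 ≤ limsup` holds because `f` is eventually at least `1`.
-/

open Filter
open scoped ENNReal

namespace MCPaper

variable {E : Type*}

/-- The two-state chain that stays at `true` with probability `p`, leaves it for `false` with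
probability `q`, and jumps from `false` to `true` with probability `1`. -/
noncomputable def twoState (p q : ℝ≥0∞) : Bool → Bool → ℝ≥0∞
  | true, true => p
  | true, false => q
  | false, true => 1
  | false, false => 0

section

variable (p q : ℝ≥0∞)

lemma hit_false_from_true (n : ℕ) :
    hitAvoid (twoState p q) false false (n + 1) true = p ^ n * q := by
  induction n with
  | zero => simp [hitAvoid, twoState]
  | succ n ih => simp [hitAvoid, ih, twoState, pow_succ']; ring

lemma firstHit_false_false (n : ℕ) :
    firstHit (twoState p q) false false (n + 2) = p ^ n * q := by
  simp [firstHit, hitAvoid, hit_false_from_true, twoState]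

lemma firstHit_false_false_one : firstHit (twoState p q) false false 1 = 0 := by
  simp [firstHit, hitAvoid, twoState]

lemma firstHit_zero (i j : Bool) : firstHit (twoState p q) i j 0 = 0 := by
  simp [firstHit, hitAvoid]

lemma firstHit_true_true_one : firstHit (twoState p q) true true 1 = p := by
  simp [firstHit, hitAvoid, twoState]

lemma firstHit_true_true_two : firstHit (twoState p q) true true 2 = q := by
  simp [firstHit, hitAvoid, twoState]

lemma firstHit_true_true_ge (n : ℕ) : firstHit (twoState p q) true true (n + 3) = 0 := by
  simp [firstHit, hitAvoid, twoState]

/-- The return time of `true` takes only the values `1` and `2`. -/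
lemma tsum_mul_firstHit_true (g : ℕ → ℝ≥0∞) :
    ∑' n, g n * firstHit (twoState p q) true true n = g 1 * p + g 2 * q := by
  rw [tsum_eq_sum (s := Finset.range 3)]
  · simp [Finset.sum_range_succ, firstHit_zero, firstHit_true_true_one, firstHit_true_true_two]
  · intro n hn
    obtain ⟨m, rfl⟩ := Nat.exists_eq_add_of_le' (not_lt.mp (fun h => hn (Finset.mem_range.mpr h)))
    simp [firstHit_true_true_ge]

variable {p q}

lemma twoState_stochastic (h : p + q = 1) : IsStochastic (twoState p q) := by
  intro i
  cases i
  · simp [twoState]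
  · simpa [tsum_bool, twoState, add_comm] using h

lemma twoState_irreducible (hq : 0 < q) : IsIrreducible (twoState p q) := by
  intro i j
  cases i <;> cases j
  · exact ⟨2, by simpa using (firstHit_false_false p q 0).symm ▸ (by simpa using hq)⟩
  · exact ⟨1, by simp [firstHit, hitAvoid, twoState]⟩
  · exact ⟨1, by simpa [firstHit, hitAvoid, twoState] using hq⟩
  · exact ⟨2, by simpa [firstHit_true_true_two] using hq⟩

lemma twoState_recurrent (h : p + q = 1) (hq : 0 < q) : IsRecurrent (twoState p q) := by
  have hp : p ≠ ⊤ := by rintro rfl; simp at h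
  have hq' : q ≠ ⊤ := by rintro rfl; simp at h
  have hpq : 1 - p = q := by rw [← h]; exact ENNReal.add_sub_cancel_left hp
  intro i
  cases i
  · rw [tsum_eq_zero_add' ENNReal.summable, tsum_eq_zero_add' ENNReal.summable]
    simp only [add_assoc, zero_add, Nat.reduceAdd, firstHit_false_false, firstHit_zero,
      firstHit_false_false_one, ENNReal.tsum_mul_right, ENNReal.tsum_geometric, hpq]
    exact ENNReal.inv_mul_cancel hq.ne' hq'
  · simpa [h] using tsum_mul_firstHit_true p q (fun _ => 1)

end

theorem stmt_5 (f : ℕ → ℝ) (hpos : ∀ n, 0 < f n) (hmono : Monotone f)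
    (htop : Tendsto f atTop atTop) (hG : MemG f) :
    limsup (fun n : ℕ => ((Real.log (f n) / n : ℝ) : EReal)) atTop = 0 := by
  apply le_antisymm
  · by_contra! hlt
    obtain ⟨c, hc0, hc⟩ := EReal.lt_iff_exists_real_btwn.mp hlt
    replace hc0 : 0 < c := by exact_mod_cast hc0
    have hfreq := frequently_lt_of_lt_limsup (by isBoundedDefault) hc
    set r : ℝ := Real.exp (-c) with hr
    have hr0 : 0 < r := Real.exp_pos _
    have hr1 : r < 1 := by rw [hr, Real.exp_lt_one_iff]; linarith
    set p : ℝ≥0∞ := ENNReal.ofReal r with hp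
    set q : ℝ≥0∞ := ENNReal.ofReal (1 - r) with hq
    have hq0 : 0 < q := ENNReal.ofReal_pos.mpr (by linarith)
    have hpq : p + q = 1 := by
      rw [hp, hq, ← ENNReal.ofReal_add hr0.le (by linarith)]; simp
    have hfin : momGen f (twoState p q) true true < ⊤ := by
      rw [momGen, tsum_mul_firstHit_true]
      finiteness
    have hfalse := hG Bool (twoState p q) (twoState_stochastic hpq) (twoState_irreducible hq0)
      (twoState_recurrent hpq hq0) true hfin false
    have hzero := ENNReal.tendsto_atTop_zero_of_tsum_ne_top hfalse.ne
    have hev := (hzero.eventually_lt_const hq0).and (eventually_ge_atTop 2)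
    obtain ⟨n, hn, hlt, hn2⟩ := (hfreq.and_eventually hev).exists
    obtain ⟨m, rfl⟩ := Nat.exists_eq_add_of_le' hn2
    refine absurd hlt (not_lt.mpr ?_)
    rw [firstHit_false_false, ← mul_assoc, hp, ← ENNReal.ofReal_pow hr0.le,
      ← ENNReal.ofReal_mul (hpos _).le]
    refine le_mul_of_one_le_left zero_le ?_
    rw [ENNReal.one_le_ofReal]
    replace hn : c < Real.log (f (m + 2)) / ((m + 2 : ℕ) : ℝ) := by exact_mod_cast hn
    rw [lt_div_iff₀ (by positivity), Real.lt_log_iff_exp_lt (hpos _)] at hn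
    calc (1 : ℝ) = Real.exp (c * ((m + 2 : ℕ) : ℝ)) * r ^ (m + 2) := by
          rw [hr, ← Real.exp_nat_mul, ← Real.exp_add, mul_neg,
            mul_comm c, add_neg_cancel, Real.exp_zero]
      _ ≤ f (m + 2) * r ^ m :=
          mul_le_mul hn.le (pow_le_pow_of_le_one hr0.le hr1.le (by omega))
            (by positivity) (hpos _).le
  · refine le_limsup_of_frequently_le (Eventually.frequently ?_) (by isBoundedDefault)
    filter_upwards [htop.eventually_ge_atTop 1] with n hn
    exact_mod_cast div_nonneg (Real.log_nonneg hn) n.cast_nonneg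

end MCPaper
end

section
/- Let f : ℕ → (0,∞) be non-decreasing with f(n) → ∞, and let an irreducible recurrent discrete-time Markov chain on a finite or countable state space be given. Suppose E f(T_ii) < ∞ for a state i, and let j ≠ i be any state. Then the conditional expectation E[f(T_ij) | T_ij < T_ii] under P_i is finite; equivalently, E f(V_ij) < ∞. -/
/-!
The bound on the moment comes from a single detour. By irreducibility, there is `m` with
`c := P_j(T_ji = m) > 0`. Hitting `j` at time `n` before returning to `i`, and then hitting `i`
for the first time `m` steps later, is one way of having `T_ii = n + m`; hence
`P_i(T_ij = n, T_ij < T_ii) * c ≤ P_i(T_ii = n + m)` (`hitAvoid_mul_le`). Multiplying by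
`f n ≤ f (n + m)` and summing over `n` gives
`c * E[f(T_ij); T_ij < T_ii] ≤ E f(T_ii) < ∞`.

The conditioning event has positive probability because a path from `i` to `j` of minimal length
among those of positive probability cannot revisit `i` (`hitAvoid_pos_or`).
-/

open Filter
open scoped ENNReal

namespace MCPaper

variable {E : Type*}

/-- One-sided strong Markov property at the hitting time of `j`: from any `x`, hitting `j` at time
`n` while avoiding `i` and then first hitting `i` after `m` further steps forces the first hitting
time of `i` to be `n + m`. -/
theorem hitAvoid_mul_le (P : E → E → ℝ≥0∞) {i j : E} (hji : j ≠ i) (m : ℕ) :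
    ∀ (n : ℕ) (x : E),
      hitAvoid P j i n x * hitAvoid P i i m j ≤ hitAvoid P i i (n + m) x
  | 0, x => by simp [hitAvoid]
  | 1, x => by
    cases m with
    | zero => simp [hitAvoid]
    | succ m =>
      rw [show 1 + (m + 1) = m + 2 by ring]
      simp only [hitAvoid]
      refine le_trans ?_ (ENNReal.le_tsum j)
      simp [hji]
  | n + 2, x => by
    rw [show n + 2 + m = (n + m) + 2 by ring]
    simp only [hitAvoid]
    rw [← ENNReal.tsum_mul_right]
    refine ENNReal.tsum_le_tsum fun k => ?_
    by_cases hk : k = i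
    · simp [hk]
    by_cases hk' : k = j
    · simp [hk']
    have ih := hitAvoid_mul_le P hji m (n + 1) k
    rw [show n + 1 + m = n + m + 1 by ring] at ih
    simp only [hk, hk', or_self, if_false, mul_assoc]
    gcongr

/-- A path from `x` to `j` of positive probability either avoids `i` at intermediate times, or
its part after a visit to `i` is a strictly shorter path of positive probability from `i` to
`j`. -/
theorem hitAvoid_pos_or (P : E → E → ℝ≥0∞) (i j : E) :
    ∀ (n : ℕ) (x : E), hitAvoid P j j n x ≠ 0 →
      hitAvoid P j i n x ≠ 0 ∨ ∃ m < n, hitAvoid P j j m i ≠ 0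
  | 0, x, h => by simp [hitAvoid] at h
  | 1, x, h => Or.inl (by simpa [hitAvoid] using h)
  | n + 2, x, h => by
    simp only [hitAvoid, ne_eq, ENNReal.tsum_eq_zero, not_forall, or_self, ite_eq_left_iff,
      mul_eq_zero, not_or] at h
    obtain ⟨k, hkj, hPk, hk⟩ := h
    by_cases hki : k = i
    · exact Or.inr ⟨n + 1, by omega, hki ▸ hk⟩
    rcases hitAvoid_pos_or P i j (n + 1) k hk with h' | ⟨m, hm, h'⟩
    · left
      simp only [hitAvoid, ne_eq, ENNReal.tsum_eq_zero, not_forall]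
      exact ⟨k, by simp [hkj, hki, hPk, h']⟩
    · exact Or.inr ⟨m, by omega, h'⟩

theorem stmt_7 (f : ℕ → ℝ) (hpos : ∀ n, 0 < f n) (hmono : Monotone f)
    (htop : Tendsto f atTop atTop)
    (S : Type*) [Countable S] (P : S → S → ℝ≥0∞)
    (hP : IsStochastic P) (hirr : IsIrreducible P) (hrec : IsRecurrent P)
    (i j : S) (hji : j ≠ i) (hfin : momGen f P i i < ⊤) :
    0 < (∑' n : ℕ, hitAvoid P j i n i) ∧
      (∑' n : ℕ, ENNReal.ofReal (f n) * hitAvoid P j i n i) /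
          (∑' n : ℕ, hitAvoid P j i n i) < ⊤ := by
  classical
  have hne : (∑' n : ℕ, hitAvoid P j i n i) ≠ 0 := by
    have hex : ∃ n, hitAvoid P j j n i ≠ 0 := (hirr i j).imp fun _ h => h.ne'
    rcases hitAvoid_pos_or P i j _ i (Nat.find_spec hex) with h | ⟨m, hm, h⟩
    · exact fun h0 => h (ENNReal.tsum_eq_zero.1 h0 _)
    · exact absurd h (Nat.find_min hex hm)
  obtain ⟨m, hm⟩ := hirr j i
  have hm0 : hitAvoid P i i m j ≠ 0 := hm.ne'
  have hle : (∑' n : ℕ, ENNReal.ofReal (f n) * hitAvoid P j i n i) * hitAvoid P i i m j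
      ≤ momGen f P i i := by
    rw [← ENNReal.tsum_mul_right]
    calc ∑' n : ℕ, ENNReal.ofReal (f n) * hitAvoid P j i n i * hitAvoid P i i m j
        ≤ ∑' n : ℕ, ENNReal.ofReal (f (n + m)) * hitAvoid P i i (n + m) i := by
          refine ENNReal.tsum_le_tsum fun n => ?_
          rw [mul_assoc]
          exact mul_le_mul' (ENNReal.ofReal_le_ofReal (hmono (Nat.le_add_right n m)))
            (hitAvoid_mul_le P hji m n i)
      _ ≤ momGen f P i i :=
          ENNReal.tsum_comp_le_tsum_of_injective (add_left_injective m)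
            fun n => ENNReal.ofReal (f n) * hitAvoid P i i n i
  refine ⟨pos_iff_ne_zero.2 hne, ENNReal.div_lt_top (fun htop' => ?_) hne⟩
  rw [htop', ENNReal.top_mul hm0] at hle
  exact absurd hfin (not_lt.2 hle)

end MCPaper
end

section
/- Let f : ℕ → (0,∞) be non-decreasing with f(n) → ∞, and let an irreducible recurrent discrete-time Markov chain on a finite or countable state space be given. If E f(T_ii) < ∞ for a state i, then E f(T_ji) < ∞ for every state j. -/
/-!
Call a state `x` good when `E f(T_xi) < ∞`. If `x` is good, `P x k > 0` and `k ≠ i`, then a first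
step from `x` to `k` gives `P_x(T_xi = n + 1) ≥ P x k * P_k(T_ki = n)`, and since `f` is
non-decreasing `P x k * E f(T_ki) ≤ E f(T_xi) < ∞`; so `k` is good (`momGen_step_lt_top`). The state
`i` is good by assumption, hence goodness propagates along every path of positive probability
starting at `i` (`momGen_lt_top_of_hit`), and by irreducibility such paths reach every state.
-/

open Filter
open scoped ENNReal

namespace MCPaper

variable {E : Type*}

section

variable {S : Type*} {P : S → S → ℝ≥0∞} {f : ℕ → ℝ} {i : S}

/-- One-step propagation: if `x` has finite moment, so has every state `k` charged by `P x`. -/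
lemma momGen_step_lt_top (hmono : Monotone f) (hfin : momGen f P i i < ⊤) {x k : S}
    (hx : momGen f P x i < ⊤) (hk : P x k ≠ 0) : momGen f P k i < ⊤ := by
  by_cases hki : k = i
  · rwa [hki]
  have hstep (n : ℕ) : P x k * firstHit P k i (n + 1) ≤ firstHit P x i (n + 2) := by
    rw [firstHit, firstHit, hitAvoid]
    refine le_trans ?_ (ENNReal.le_tsum k)
    simp [hki]
  have hle : P x k * momGen f P k i ≤ momGen f P x i := by
    have h0 : momGen f P k i
        = ∑' n : ℕ, ENNReal.ofReal (f (n + 1)) * firstHit P k i (n + 1) := by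
      rw [momGen, tsum_eq_zero_add' ENNReal.summable]
      simp [firstHit, hitAvoid]
    rw [h0, ← ENNReal.tsum_mul_left]
    calc ∑' n : ℕ, P x k * (ENNReal.ofReal (f (n + 1)) * firstHit P k i (n + 1))
        ≤ ∑' n : ℕ, ENNReal.ofReal (f (n + 2)) * firstHit P x i (n + 2) := by
          refine ENNReal.tsum_le_tsum fun n => ?_
          rw [mul_left_comm]
          exact mul_le_mul' (ENNReal.ofReal_le_ofReal (hmono (Nat.le_succ _))) (hstep n)
      _ ≤ momGen f P x i :=
          ENNReal.tsum_comp_le_tsum_of_injective (add_left_injective 2)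
            (fun n => ENNReal.ofReal (f n) * firstHit P x i n)
  exact ENNReal.lt_top_of_mul_ne_top_right (hle.trans_lt hx).ne hk

/-- Propagation along paths: `j` has finite moment if it can be hit from a state `x` that does. -/
lemma momGen_lt_top_of_hit (hmono : Monotone f) (hfin : momGen f P i i < ⊤) (j : S) :
    ∀ (n : ℕ) (x : S), momGen f P x i < ⊤ → hitAvoid P j j n x ≠ 0 → momGen f P j i < ⊤
  | 0, _, _, h => absurd rfl h
  | 1, _, hx, h => momGen_step_lt_top hmono hfin hx h
  | n + 2, x, hx, h => by
    rw [hitAvoid, ne_eq, ENNReal.tsum_eq_zero, not_forall] at h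
    obtain ⟨k, hk⟩ := h
    split_ifs at hk with hkj
    · exact absurd rfl hk
    · exact momGen_lt_top_of_hit hmono hfin j (n + 1) k
        (momGen_step_lt_top hmono hfin hx (left_ne_zero_of_mul hk)) (right_ne_zero_of_mul hk)

end

theorem stmt_8 (f : ℕ → ℝ) (hpos : ∀ n, 0 < f n) (hmono : Monotone f)
    (htop : Tendsto f atTop atTop)
    (S : Type*) [Countable S] (P : S → S → ℝ≥0∞)
    (hP : IsStochastic P) (hirr : IsIrreducible P) (hrec : IsRecurrent P)
    (i : S) (hfin : momGen f P i i < ⊤) :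
    ∀ j : S, momGen f P j i < ⊤ := by
  intro j
  obtain ⟨n, hn⟩ := hirr i j
  exact momGen_lt_top_of_hit hmono hfin j n i hfin hn.ne'

end MCPaper
end

section
/- Let f : ℕ → (0,∞) be non-decreasing, and suppose there exists K > 0 such that f(x+y) ≤ K·f(x)·f(y) for all positive integers x, y. Let an irreducible recurrent discrete-time Markov chain on a finite or countable state space be given, and let i, j be states with E f(T_ij) < ∞ and E f(T_ji) < ∞. Then E f(T_ii) < ∞; in fact E f(T_ii) ≤ K · E f(T_ij) · E f(T_ji). -/
/-!
The total time `T_ij + T'_ji` of an excursion from `i` to `j` and back dominates `T_ii`, so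
`E f(T_ii) ≤ E f(T_ij + T'_ji) ≤ K · E f(T_ij) · E f(T_ji)` for monotone `f`.

Everything is phrased through the functional `hitExp P j w x = E_x[w(T_xj); T_xj < ∞]`, which obeys
a one-step recursion (`hitExp_step`). Stochastic domination is the inequality
`P_x(T_xj + T'_ji ≤ n) ≤ P_x(T_xi ≤ n)` (`conv_le`), proved for all starting points `x`
simultaneously by induction on `n`; it holds also when `i = j`. It turns into an inequality of
expectations by writing a monotone `f` as the sum of its increments (`tsum_le_of_dominated`).

Passing from distribution functions to expectations needs both hitting times to be almost surely
finite (`hit_prob_one`): the set of states from which `j` is hit almost surely contains `j` by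
recurrence and is closed under the transitions of `P`, so it is everything by irreducibility.
-/


open Filter
open scoped ENNReal

namespace MCPaper

variable {E : Type*}

/-! ### One-step recursion for functionals of hitting times -/

/-- `hitExp P j w x` is the expectation of `w (T_xj)` on the event `T_xj < ∞`. -/
noncomputable def hitExp (P : E → E → ℝ≥0∞) (j : E) (w : ℕ → ℝ≥0∞) (x : E) : ℝ≥0∞ :=
  ∑' n : ℕ, w n * firstHit P x j n

lemma firstHit_zero_s9 (P : E → E → ℝ≥0∞) (x j : E) : firstHit P x j 0 = 0 := by
  simp [firstHit, hitAvoid]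

lemma firstHit_one (P : E → E → ℝ≥0∞) (x j : E) : firstHit P x j 1 = P x j := by
  simp [firstHit, hitAvoid]

open Classical in
lemma firstHit_add_two (P : E → E → ℝ≥0∞) (x j : E) (n : ℕ) :
    firstHit P x j (n + 2) = ∑' k : E, if k = j then 0 else P x k * firstHit P k j (n + 1) := by
  simp [firstHit, hitAvoid]

open Classical in
/-- Conditioning on the first step. -/
lemma hitExp_step (P : E → E → ℝ≥0∞) (j : E) (w : ℕ → ℝ≥0∞) (x : E) :
    hitExp P j w x =
      w 1 * P x j + ∑' k : E, if k = j then 0 else P x k * hitExp P j (fun n => w (n + 1)) k := by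
  have h1 : ∀ k, hitExp P j (fun n => w (n + 1)) k
      = ∑' n : ℕ, w (n + 2) * firstHit P k j (n + 1) := by
    intro k
    rw [hitExp, tsum_eq_zero_add' ENNReal.summable]
    simp [firstHit_zero_s9, add_assoc]
  rw [hitExp, tsum_eq_zero_add' ENNReal.summable, tsum_eq_zero_add' ENNReal.summable]
  simp only [firstHit_zero_s9, mul_zero, zero_add, firstHit_one, add_assoc, Nat.reduceAdd,
    firstHit_add_two, h1]
  congr 1
  simp_rw [← ENNReal.tsum_mul_left]
  rw [ENNReal.tsum_comm]
  refine tsum_congr fun k => ?_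
  split_ifs with hk
  · simp
  · refine tsum_congr fun n => ?_
    ring

/-- `hitCdf P j n x = P_x(T_xj ≤ n)`. -/
noncomputable def hitCdf (P : E → E → ℝ≥0∞) (j : E) (n : ℕ) (x : E) : ℝ≥0∞ :=
  hitExp P j (fun m => if m ≤ n then 1 else 0) x

lemma hitCdf_zero (P : E → E → ℝ≥0∞) (j x : E) : hitCdf P j 0 x = 0 := by
  simp only [hitCdf, hitExp, ENNReal.tsum_eq_zero]
  intro n
  rcases n with _ | n <;> simp [firstHit_zero_s9]

open Classical in
lemma hitCdf_succ (P : E → E → ℝ≥0∞) (j x : E) (n : ℕ) :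
    hitCdf P j (n + 1) x = P x j + ∑' k : E, if k = j then 0 else P x k * hitCdf P j n k := by
  rw [hitCdf, hitExp_step]
  simp [hitCdf]

open Classical in
/-- A row of `P` with the entry at `j` split off. -/
lemma row_split (P : E → E → ℝ≥0∞) (j x : E) (v : E → ℝ≥0∞) (c : ℝ≥0∞) :
    c * P x j + ∑' k : E, (if k = j then 0 else P x k * v k)
      = ∑' k : E, P x k * (if k = j then c else v k) := by
  rw [ENNReal.tsum_eq_add_tsum_ite (f := fun k => P x k * (if k = j then c else v k)) j]
  simp only [if_true, mul_comm c]
  congr 1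
  refine tsum_congr fun k => ?_
  split_ifs <;> rfl

lemma hitCdf_le_one {P : E → E → ℝ≥0∞} (hP : IsStochastic P) (j : E) (n : ℕ) :
    ∀ x, hitCdf P j n x ≤ 1 := by
  classical
  induction n with
  | zero => intro x; simp [hitCdf_zero]
  | succ n ih =>
    intro x
    rw [hitCdf_succ, ← one_mul (P x j), row_split]
    refine le_trans (ENNReal.tsum_le_tsum fun k => ?_) (hP x).le
    refine mul_le_of_le_one_right' ?_
    split_ifs
    · exact le_rfl
    · exact ih k

lemma hitProb_le_one {P : E → E → ℝ≥0∞} (hP : IsStochastic P) (j x : E) :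
    hitExp P j (fun _ => 1) x ≤ 1 := by
  rw [hitExp]
  refine ENNReal.tsum_le_of_sum_range_le fun n => ?_
  refine le_trans ?_ (hitCdf_le_one hP j n x)
  rw [hitCdf, hitExp]
  refine le_trans (le_of_eq ?_) (ENNReal.sum_le_tsum (Finset.range n))
  refine Finset.sum_congr rfl fun m hm => ?_
  have hmn : m ≤ n := (Finset.mem_range.1 hm).le
  simp [hmn]

/-! ### Almost sure finiteness of hitting times -/

/-- States from which `j` is hit almost surely are closed under transitions. -/
lemma hitProb_closed {P : E → E → ℝ≥0∞} (hP : IsStochastic P) {j x k : E}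
    (hx : hitExp P j (fun _ => 1) x = 1) (hk : P x k ≠ 0) (hkj : k ≠ j) :
    hitExp P j (fun _ => 1) k = 1 := by
  classical
  by_contra hne
  have hlt : hitExp P j (fun _ => 1) k < 1 := lt_of_le_of_ne (hitProb_le_one hP j k) hne
  have hfin : P x k ≠ ⊤ :=
    ne_top_of_le_ne_top ENNReal.one_ne_top ((ENNReal.le_tsum k).trans (hP x).le)
  have hsum := hx
  rw [hitExp_step, row_split] at hsum
  have : ∑' k : E, P x k * (if k = j then 1 else hitExp P j (fun _ => 1) k)
      < ∑' k : E, P x k := by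
    refine ENNReal.tsum_lt_tsum (i := k) (by rw [hsum]; simp) (fun l => ?_) ?_
    · refine mul_le_of_le_one_right' ?_
      split_ifs
      · exact le_rfl
      · exact hitProb_le_one hP j l
    · simp only [hkj, if_false]
      calc P x k * hitExp P j (fun _ => 1) k < P x k * 1 :=
            ENNReal.mul_lt_mul_right hk hfin hlt
        _ = P x k := mul_one _
  rw [hsum, hP x] at this
  exact lt_irrefl _ this

/-- In an irreducible recurrent chain every hitting time is almost surely finite. -/
lemma hit_prob_one {P : E → E → ℝ≥0∞} (hP : IsStochastic P) (hirr : IsIrreducible P)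
    (hrec : IsRecurrent P) (i j : E) : hitExp P j (fun _ => 1) i = 1 := by
  classical
  have hj : hitExp P j (fun _ => 1) j = 1 := by simpa [hitExp] using hrec j
  have step : ∀ x k, hitExp P j (fun _ => 1) x = 1 → P x k ≠ 0 →
      hitExp P j (fun _ => 1) k = 1 := by
    intro x k hx hk
    by_cases hkj : k = j
    · rw [hkj, hj]
    · exact hitProb_closed hP hx hk hkj
  have key : ∀ n x, hitExp P j (fun _ => 1) x = 1 → firstHit P x i (n + 1) ≠ 0 →
      hitExp P j (fun _ => 1) i = 1 := by
    intro n
    induction n with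
    | zero =>
      intro x hx h
      rw [zero_add, firstHit_one] at h
      exact step x i hx h
    | succ n ih =>
      intro x hx h
      rw [firstHit_add_two, Ne, ENNReal.tsum_eq_zero] at h
      push Not at h
      obtain ⟨k, hk⟩ := h
      split_ifs at hk with hki
      · exact absurd rfl hk
      · exact ih k (step x k hx (left_ne_zero_of_mul hk)) (right_ne_zero_of_mul hk)
  obtain ⟨n, hn⟩ := hirr j i
  rcases n with _ | n
  · simp [firstHit_zero_s9] at hn
  · exact key n j hj hn.ne'

/-! ### Stochastic domination of the return time -/

/-- `convW P i j n m = P_j(m + T_ji ≤ n)`. -/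
noncomputable def convW (P : E → E → ℝ≥0∞) (i j : E) (n m : ℕ) : ℝ≥0∞ :=
  ∑' l : ℕ, if m + l ≤ n then firstHit P j i l else 0

/-- Stochastic domination: `P_x(T_xj + T'_ji ≤ n) ≤ P_x(T_xi ≤ n)`, with `T'_ji` an independent
copy of the hitting time of `i` from `j`. -/
lemma conv_le {P : E → E → ℝ≥0∞} (hP : IsStochastic P) (i j : E) (n : ℕ) :
    ∀ x, hitExp P j (convW P i j n) x ≤ hitCdf P i n x := by
  classical
  -- The bound by `1` is what controls the paths that visit `i` before `j`.
  have hW : ∀ n m, convW P i j n m ≤ 1 := by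
    intro n m
    refine le_trans (ENNReal.tsum_le_tsum fun l => ?_) (hitProb_le_one hP i j)
    split_ifs <;> simp
  have hC : ∀ n x, hitExp P j (convW P i j n) x ≤ 1 := by
    intro n x
    refine le_trans (ENNReal.tsum_le_tsum fun m => ?_) (hitProb_le_one hP j x)
    exact mul_le_mul_left (hW n m) _
  induction n with
  | zero =>
    intro x
    rw [hitCdf_zero, nonpos_iff_eq_zero, hitExp, ENNReal.tsum_eq_zero]
    intro m
    rcases m with _ | m
    · simp [firstHit_zero_s9]
    · simp [convW]
  | succ n ih =>
    intro x
    have h1 : convW P i j (n + 1) 1 = hitCdf P i n j := by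
      rw [convW, hitCdf, hitExp]
      refine tsum_congr fun l => ?_
      simp [add_comm 1 l]
    have h2 : (fun m => convW P i j (n + 1) (m + 1)) = convW P i j n := by
      funext m
      rw [convW, convW]
      refine tsum_congr fun l => ?_
      simp [add_right_comm m 1 l]
    rw [hitExp_step, h1, h2, hitCdf_succ, row_split, ← one_mul (P x i), row_split]
    refine ENNReal.tsum_le_tsum fun k => ?_
    refine mul_le_mul_right ?_ _
    split_ifs with hkj hki hki
    · exact hitCdf_le_one hP i n j
    · rw [hkj]
    · exact hC n k
    · exact ih k

/-! ### From stochastic domination to expectations -/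

/-- Summation by parts: a monotone `φ` is `φ 0` plus the sum of its increments. -/
lemma layer_cake {ι : Type*} (φ : ℕ → ℝ≥0∞) (hφ : Monotone φ) (b : ι → ℝ≥0∞) (s : ι → ℕ) :
    ∑' p, φ (s p) * b p = φ 0 * ∑' p, b p +
      ∑' m : ℕ, (φ (m + 1) - φ m) * ∑' p, if m < s p then b p else 0 := by
  have hφ' : ∀ n, φ n = φ 0 + ∑' m : ℕ, if m < n then φ (m + 1) - φ m else 0 := by
    intro n
    rw [tsum_eq_sum (s := Finset.range n) (by
      intro m hm
      simp [show ¬ m < n by simpa using hm])]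
    induction n with
    | zero => simp
    | succ n ih =>
      rw [Finset.sum_range_succ, Finset.sum_congr rfl
        (g := fun m => if m < n then φ (m + 1) - φ m else 0), ← add_assoc, ← ih]
      · simp [add_tsub_cancel_of_le (hφ n.le_succ)]
      · intro m hm
        have := Finset.mem_range.1 hm
        simp [this, this.trans n.lt_succ_self]
  simp_rw [← ENNReal.tsum_mul_left]
  rw [ENNReal.tsum_comm, ← ENNReal.tsum_add]
  refine tsum_congr fun p => ?_
  rw [hφ' (s p), add_mul, ← ENNReal.tsum_mul_right]
  congr 1
  refine tsum_congr fun m => ?_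
  split_ifs <;> simp

lemma tail_eq {ι : Type*} (a : ι → ℝ≥0∞) (s : ι → ℕ) (ha : ∑' p, a p = 1) (n : ℕ) :
    (∑' p, if n < s p then a p else 0) = 1 - ∑' p, if s p ≤ n then a p else 0 := by
  refine ENNReal.eq_sub_of_add_eq ?_ ?_
  · refine ne_top_of_le_ne_top ENNReal.one_ne_top
      (le_trans (ENNReal.tsum_le_tsum fun p => ?_) ha.le)
    split_ifs <;> simp
  · rw [← ENNReal.tsum_add, ← ha]
    refine tsum_congr fun p => ?_
    by_cases hp : s p ≤ n
    · simp [hp, not_lt.2 hp]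
    · simp [hp, not_le.1 hp]

/-- If the weights `b` at positions `t` stochastically dominate the weights `a` at positions `s`,
both of total mass `1`, then the means of a monotone function compare in the same order. -/
lemma tsum_le_of_dominated {ι κ : Type*} (φ : ℕ → ℝ≥0∞) (hφ : Monotone φ)
    (a : ι → ℝ≥0∞) (s : ι → ℕ) (b : κ → ℝ≥0∞) (t : κ → ℕ)
    (ha : ∑' p, a p = 1) (hb : ∑' p, b p = 1)
    (h : ∀ n, (∑' p, if t p ≤ n then b p else 0) ≤ ∑' p, if s p ≤ n then a p else 0) :
    ∑' p, φ (s p) * a p ≤ ∑' p, φ (t p) * b p := by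
  rw [layer_cake φ hφ, layer_cake φ hφ, ha, hb]
  refine add_le_add le_rfl (ENNReal.tsum_le_tsum fun m => mul_le_mul_right ?_ _)
  refine le_trans (tail_eq a s ha m).le (le_trans ?_ (tail_eq b t hb m).ge)
  exact tsub_le_tsub_left (h m) _

theorem stmt_9 (f : ℕ → ℝ) (hpos : ∀ n, 0 < f n) (hmono : Monotone f)
    (K : ℝ) (hK : 0 < K)
    (hsub : ∀ x y : ℕ, 0 < x → 0 < y → f (x + y) ≤ K * f x * f y)
    (S : Type*) [Countable S] (P : S → S → ℝ≥0∞)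
    (hP : IsStochastic P) (hirr : IsIrreducible P) (hrec : IsRecurrent P)
    (i j : S) (hij : momGen f P i j < ⊤) (hji : momGen f P j i < ⊤) :
    momGen f P i i < ⊤ ∧
      momGen f P i i ≤ ENNReal.ofReal K * momGen f P i j * momGen f P j i := by
  have hle : momGen f P i i ≤ ENNReal.ofReal K * momGen f P i j * momGen f P j i := by
    have h1 : ∀ x y : S, ∑' n, firstHit P x y n = 1 := by
      intro x y
      simpa [hitExp] using hit_prob_one hP hirr hrec x y
    have hdom := tsum_le_of_dominated (fun n => ENNReal.ofReal (f n))
      (fun _ _ hab => ENNReal.ofReal_le_ofReal (hmono hab))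
      (fun n => firstHit P i i n) (fun n => n)
      (fun p : ℕ × ℕ => firstHit P i j p.1 * firstHit P j i p.2) (fun p => p.1 + p.2)
      (h1 i i)
      (by
        rw [ENNReal.tsum_prod']
        simp [ENNReal.tsum_mul_left, h1])
      (by
        intro n
        refine le_trans (le_of_eq ?_) (le_trans (conv_le hP i j n i) (le_of_eq ?_))
        · rw [ENNReal.tsum_prod', hitExp]
          refine tsum_congr fun m => ?_
          rw [convW, ← ENNReal.tsum_mul_right]
          refine tsum_congr fun l => ?_
          simp only [ite_mul, zero_mul, mul_comm (firstHit P i j m)]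
        · simp [hitCdf, hitExp])
    refine le_trans hdom ?_
    rw [ENNReal.tsum_prod', momGen, mul_assoc, ← ENNReal.tsum_mul_right,
      ← ENNReal.tsum_mul_left]
    refine ENNReal.tsum_le_tsum fun m => ?_
    rw [momGen, ← ENNReal.tsum_mul_left, ← ENNReal.tsum_mul_left]
    refine ENNReal.tsum_le_tsum fun l => ?_
    -- Submultiplicativity is only available at positive times, but hitting times are positive.
    rcases Nat.eq_zero_or_pos m with rfl | hm
    · simp [firstHit_zero_s9]
    rcases Nat.eq_zero_or_pos l with rfl | hl
    · simp [firstHit_zero_s9]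
    calc ENNReal.ofReal (f (m + l)) * (firstHit P i j m * firstHit P j i l)
        ≤ (ENNReal.ofReal K * ENNReal.ofReal (f m) * ENNReal.ofReal (f l))
            * (firstHit P i j m * firstHit P j i l) := by
          refine mul_le_mul_left ?_ _
          rw [← ENNReal.ofReal_mul hK.le, ← ENNReal.ofReal_mul (mul_pos hK (hpos m)).le]
          exact ENNReal.ofReal_le_ofReal (hsub m l hm hl)
      _ = _ := by ring
  refine ⟨lt_of_le_of_lt hle ?_, hle⟩
  exact ENNReal.mul_lt_top (ENNReal.mul_lt_top ENNReal.ofReal_lt_top hij) hji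

end MCPaper
end
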